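/- arXiv:1903.10191 — 2 statements merged into one kernel-verified Lean document; each statement's English description precedes it below -/
import Mathlib

section
/- Let d ≥ 1 and 1 < q ≤ α ≤ p ≤ ∞. Let φ ∈ L^1(ℝ^d) with φ ≥ 0 and ‖φ‖_{L^1} = 1. Then for every f ∈ 𝓗(q,p,α), lim_{ε→0⁺} ‖f ∗ St^{(1)}_ε φ − f‖_{𝓗(q,p,α)} = 0, where St^{(1)}_ε φ(x) = ε^{-d} φ(x/ε). Consequently 𝓗(q,p,α) is an essential Banach L^1(ℝ^d)-module. -/
/-!
With `ν = φ dy`, a probability measure, `f ∗ St^{(1)}_ε φ` is the average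
`avg ν ε f : x ↦ ∫ f(x - εy) dν(y)` of translates of `f` (`conv_eq_avg`). Write `N` for the norm of
`(L^{q'}, ℓ^{p'})`; by duality of exponents `1 ≤ p' ≤ α' ≤ q' < ∞`, the last because `1 < q`.

On the amalgam space, translations are uniformly bounded (`amalgam_tr_le`) and, as both exponents
are finite, strongly continuous at `0` (`tendsto_amalgam_tr`). Minkowski's inequality on each cube
and Jensen's inequality in the sequence variable bound `N(avg ν t g - g)^{p'}` by the `ν`-average of
`N(g(· - ty) - g)^{p'}` (`amalgam_avg_sub_rpow_le`), so `N(avg ν t g - g)` is bounded uniformly in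
`t` and in `g` with `N(g) ≤ 1`, and tends to `0` with `t` (`tendsto_amalgam_avg`).

Now let `f = Σ c_n St_{ρ_n} g_n` with `St = St^{(α')}`. Since `p' ≤ α' ≤ q'`, `N` dominates the
`L^{α'}` norm, for which `St_ρ` is an isometry. The series therefore converges absolutely almost
everywhere and in `L^1_loc`, and averaging may be done term by term (`avg_tsum`). Averaging and
dilation satisfy `avg ν ε (St_ρ g) = St_ρ (avg ν (ε/ρ) g)` (`avg_smul_St`), whence
`f ∗ St^{(1)}_ε φ - f = Σ c_n St_{ρ_n} h_n` with `h_n = avg ν (ε/ρ_n) g_n - g_n`. Normalising `h_n`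
by `N(h_n) + ε` turns this into an 𝔥-decomposition with coefficients `c_n (N(h_n) + ε)`, and
`Σ |c_n| (N(h_n) + ε) → 0` as `ε → 0⁺` by dominated convergence in `n`.
-/


open MeasureTheory Filter Topology ENNReal

noncomputable section

/-- Dilation operator `St^{(α)}_ρ f (x) = ρ^{-d/α} f(x/ρ)` on functions on `ℝ^d`. -/
def St (d : ℕ) (α : ℝ≥0∞) (ρ : ℝ) (f : (Fin d → ℝ) → ℂ) : (Fin d → ℝ) → ℂ :=
  fun x => (ρ ^ (-(d : ℝ) * (1 / α).toReal) : ℝ) • f (ρ⁻¹ • x)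

/-- The cube `I^ρ_k = Π_j [k_j ρ, (k_j+1) ρ)`. -/
def cube (d : ℕ) (ρ : ℝ) (k : Fin d → ℤ) : Set (Fin d → ℝ) :=
  Set.univ.pi fun j => Set.Ico ((k j : ℝ) * ρ) (((k j : ℝ) + 1) * ρ)

/-- The amalgam norm `_ρ‖f‖_{q,p}`. -/
def amalgamNorm (d : ℕ) (q p : ℝ≥0∞) (ρ : ℝ) (f : (Fin d → ℝ) → ℂ) : ℝ≥0∞ :=
  if p = ∞ then ⨆ k : Fin d → ℤ, eLpNorm ((cube d ρ k).indicator f) q volume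
  else (∑' k : Fin d → ℤ,
      (eLpNorm ((cube d ρ k).indicator f) q volume) ^ p.toReal) ^ (1 / p.toReal)

/-- The Fofana norm `‖f‖_{q,p,α} = sup_{ρ>0} ρ^{d(1/α-1/q)} · _ρ‖f‖_{q,p}`. -/
def fofanaNorm (d : ℕ) (q p α : ℝ≥0∞) (f : (Fin d → ℝ) → ℂ) : ℝ≥0∞ :=
  ⨆ (ρ : ℝ) (_ : 0 < ρ),
    ENNReal.ofReal (ρ ^ ((d : ℝ) * ((1 / α).toReal - (1 / q).toReal))) *
      amalgamNorm d q p ρ f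

/-- `{(c n, ρ n, g n)}` is an 𝔥-decomposition of `f` (for the space `𝓗(q,p,α)`,
here parametrized by the conjugate exponents `q', p', α'`):
`Σ |c_n| < ∞`, each `g n` is in the unit ball of the amalgam space `(L^{q'}, ℓ^{p'})`,
and `f = Σ_n c_n St^{(α')}_{ρ_n} g_n` in the sense of `L^1_loc`. -/
structure IsHDecomp (d : ℕ) (q' p' α' : ℝ≥0∞) (f : (Fin d → ℝ) → ℂ)
    (c : ℕ → ℂ) (ρ : ℕ → ℝ) (g : ℕ → (Fin d → ℝ) → ℂ) : Prop where
  summable : Summable fun n => ‖c n‖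
  rho_pos : ∀ n, 0 < ρ n
  loc_int : ∀ n, LocallyIntegrable (g n) volume
  norm_le : ∀ n, amalgamNorm d q' p' 1 (g n) ≤ 1
  f_loc_int : LocallyIntegrable f volume
  tendsto : ∀ K : Set (Fin d → ℝ), IsCompact K →
    Tendsto (fun m => ∫ x in K, ‖(∑ n ∈ Finset.range m, c n • St d α' (ρ n) (g n)) x - f x‖)
      atTop (𝓝 0)

/-- Membership in the space `𝓗(q,p,α)` (parametrized by conjugate exponents). -/
def MemH (d : ℕ) (q' p' α' : ℝ≥0∞) (f : (Fin d → ℝ) → ℂ) : Prop :=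
  ∃ c ρ g, IsHDecomp d q' p' α' f c ρ g

/-- The norm of `𝓗(q,p,α)`:  `inf Σ|c_n|` over all 𝔥-decompositions. -/
def HNorm (d : ℕ) (q' p' α' : ℝ≥0∞) (f : (Fin d → ℝ) → ℂ) : ℝ≥0∞ :=
  sInf {s | ∃ c ρ g, IsHDecomp d q' p' α' f c ρ g ∧ s = ∑' n, ENNReal.ofReal ‖c n‖}

end

/-! ### Jensen, Minkowski and the amalgam norm -/

/-- Jensen's inequality for `s ↦ s ^ r` and a probability measure. -/
theorem lintegral_rpow_le_of_prob {Y : Type*} [MeasurableSpace Y] (ν : Measure Y)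
    [IsProbabilityMeasure ν] {r : ℝ} (hr : 1 ≤ r) {F : Y → ℝ≥0∞} (hF : AEMeasurable F ν) :
    (∫⁻ y, F y ∂ν) ^ r ≤ ∫⁻ y, F y ^ r ∂ν := by
  have hr0 : 0 < r := by linarith
  have h := eLpNorm_le_eLpNorm_of_exponent_le (μ := ν) (p := 1) (q := ENNReal.ofReal r)
    (by simpa using ENNReal.ofReal_le_ofReal hr) hF.aestronglyMeasurable
  rw [eLpNorm_one_eq_lintegral_enorm,
    eLpNorm_eq_lintegral_rpow_enorm_toReal (by simpa using hr0) (by simp),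
    ENNReal.toReal_ofReal hr0.le] at h
  simp only [enorm_eq_self] at h
  calc (∫⁻ y, F y ∂ν) ^ r ≤ ((∫⁻ y, F y ^ r ∂ν) ^ (1 / r)) ^ r :=
        ENNReal.rpow_le_rpow h hr0.le
    _ = _ := by rw [← ENNReal.rpow_mul, one_div_mul_cancel hr0.ne', ENNReal.rpow_one]

/-- Minkowski's integral inequality: the `L^r` norm of an integral is at most the integral of the
`L^r` norms. The finiteness hypothesis allows the left side to be cancelled in the usual
duality argument, where Hölder is applied to `S ^ r = S * S ^ (r - 1)`. -/
theorem minkowski_lintegral {X Y : Type*} [MeasurableSpace X] [MeasurableSpace Y]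
    (μ : Measure X) (ν : Measure Y) [SFinite μ] [SFinite ν] {r : ℝ} (hr : 1 ≤ r)
    {F : X → Y → ℝ≥0∞} (hF : Measurable (Function.uncurry F))
    (hfin : ∫⁻ x, (∫⁻ y, F x y ∂ν) ^ r ∂μ ≠ ∞) :
    (∫⁻ x, (∫⁻ y, F x y ∂ν) ^ r ∂μ) ^ (1 / r) ≤
      ∫⁻ y, (∫⁻ x, F x y ^ r ∂μ) ^ (1 / r) ∂ν := by
  have hr0 : 0 < r := by linarith
  rcases eq_or_lt_of_le hr with rfl | hr1
  · simp only [ENNReal.rpow_one, div_one]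
    exact (lintegral_lintegral_swap hF.aemeasurable).le
  set S : X → ℝ≥0∞ := fun x => ∫⁻ y, F x y ∂ν with hS
  have hSm : Measurable S := hF.lintegral_prod_right'
  set A := ∫⁻ x, S x ^ r ∂μ with hA
  rcases eq_or_ne A 0 with hA0 | hA0
  · rw [hA0, ENNReal.zero_rpow_of_pos (by positivity)]; exact zero_le
  have hpq : r.HolderConjugate (r / (r - 1)) := Real.HolderConjugate.conjExponent hr1
  set s := r / (r - 1) with hs
  have hs0 : 0 < s := hpq.symm.pos
  have hrs : (r - 1) * s = r := by rw [hs]; field_simp [(by linarith : r - 1 ≠ 0)]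
  have hFy : ∀ y, Measurable fun x => F x y := fun y => hF.comp (measurable_id.prodMk measurable_const)
  have hFx : ∀ x, Measurable fun y => F x y := fun x => hF.comp (measurable_const.prodMk measurable_id)
  have key : A ≤ (∫⁻ y, (∫⁻ x, F x y ^ r ∂μ) ^ (1 / r) ∂ν) * A ^ (1 / s) := by
    calc A = ∫⁻ x, ∫⁻ y, F x y * S x ^ (r - 1) ∂ν ∂μ := by
          refine lintegral_congr fun x => ?_
          rw [lintegral_mul_const _ (hFx x)]
          change S x ^ r = S x * S x ^ (r - 1)
          conv_rhs => rw [← ENNReal.rpow_one (S x), ← ENNReal.rpow_mul, one_mul]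
          rw [← ENNReal.rpow_add_of_nonneg _ _ (by norm_num) (by linarith)]
          congr 1; ring
      _ = ∫⁻ y, ∫⁻ x, F x y * S x ^ (r - 1) ∂μ ∂ν := by
          refine lintegral_lintegral_swap (Measurable.aemeasurable ?_)
          exact hF.mul ((hSm.pow_const _).comp measurable_fst)
      _ ≤ ∫⁻ y, (∫⁻ x, F x y ^ r ∂μ) ^ (1 / r) * A ^ (1 / s) ∂ν := by
          refine lintegral_mono fun y => ?_
          refine (ENNReal.lintegral_mul_le_Lp_mul_Lq μ hpq (hFy y).aemeasurable
            (hSm.pow_const (r - 1)).aemeasurable).trans (le_of_eq ?_)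
          simp only [← ENNReal.rpow_mul, hrs]
          rfl
      _ = _ := by
          rw [lintegral_mul_const]
          refine Measurable.pow_const ?_ _
          exact ((hF.pow_const r).comp measurable_swap).lintegral_prod_right'
  have hAs0 : A ^ (1 / s) ≠ 0 := by simp [ENNReal.rpow_eq_zero_iff, hA0, hfin, hs0]
  have hAst : A ^ (1 / s) ≠ ∞ := ENNReal.rpow_ne_top_of_nonneg (by positivity) hfin
  have e : A = A ^ (1 / r) * A ^ (1 / s) := by
    rw [← ENNReal.rpow_add _ _ hA0 hfin]
    have := hpq.inv_add_inv_eq_one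
    simp only [one_div, this, ENNReal.rpow_one]
  refine (ENNReal.mul_le_mul_iff_left hAs0 hAst).1 ?_
  rw [← e]; exact key

/-- The `L^q` norm of `g` on the unit cube `I_k`. The amalgam norm is the `ℓ^p` norm of
`k ↦ locNorm d q g k`, see `amalgam_eq`. -/
noncomputable def locNorm (d : ℕ) (q : ℝ≥0∞) (g : (Fin d → ℝ) → ℂ) (k : Fin d → ℤ) : ℝ≥0∞ :=
  eLpNorm g q (volume.restrict (cube d 1 k))

theorem mem_cube_iff {d : ℕ} {k : Fin d → ℤ} {x : Fin d → ℝ} :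
    x ∈ cube d 1 k ↔ ∀ j, ⌊x j⌋ = k j := by
  simp [cube, Int.floor_eq_iff]

theorem measurableSet_cube (d : ℕ) (k : Fin d → ℤ) : MeasurableSet (cube d 1 k) :=
  MeasurableSet.univ_pi fun _ => measurableSet_Ico

theorem volume_cube (d : ℕ) (k : Fin d → ℤ) : volume (cube d 1 k) = 1 := by
  simp [cube, volume_pi_pi]

instance (d : ℕ) (k : Fin d → ℤ) : IsProbabilityMeasure (volume.restrict (cube d 1 k)) :=
  ⟨by simp [volume_cube]⟩

theorem amalgam_eq {d : ℕ} {q p : ℝ≥0∞} (hp0 : p ≠ 0) (hp : p ≠ ∞) (f : (Fin d → ℝ) → ℂ) :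
    amalgamNorm d q p 1 f = eLpNorm (locNorm d q f) p Measure.count := by
  rw [amalgamNorm, if_neg hp, eLpNorm_eq_lintegral_rpow_enorm_toReal hp0 hp, lintegral_count]
  simp [locNorm, eLpNorm_indicator_eq_eLpNorm_restrict (measurableSet_cube _ _)]

theorem lintegral_cubes {d : ℕ} (F : (Fin d → ℝ) → ℝ≥0∞) :
    ∫⁻ x, F x = ∑' k : Fin d → ℤ, ∫⁻ x in cube d 1 k, F x := by
  rw [← lintegral_iUnion (measurableSet_cube d)]
  · rw [show (⋃ k, cube d 1 k) = Set.univ from ?_, setLIntegral_univ]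
    refine Set.eq_univ_of_forall fun x => Set.mem_iUnion.2 ⟨fun j => ⌊x j⌋, ?_⟩
    simp [mem_cube_iff]
  · intro k l hkl
    refine Set.disjoint_left.2 fun x hk hl => hkl ?_
    funext j
    rw [← mem_cube_iff.1 hk j, mem_cube_iff.1 hl j]

/-- The inclusion `ℓ^p ⊆ ℓ^r` with norm at most one, for `p ≤ r < ∞`. -/
theorem eLpNorm_count_mono_exp {ι : Type*} [MeasurableSpace ι] [MeasurableSingletonClass ι]
    [Countable ι] {a : ι → ℝ≥0∞} {p r : ℝ≥0∞} (hp0 : p ≠ 0) (hpr : p ≤ r) (hr : r ≠ ∞) :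
    eLpNorm a r Measure.count ≤ eLpNorm a p Measure.count := by
  have hp : p ≠ ∞ := ne_top_of_le_ne_top hr hpr
  have hr0 : r ≠ 0 := fun h => hp0 (le_zero_iff.1 (h ▸ hpr))
  have hpt : 0 < p.toReal := ENNReal.toReal_pos hp0 hp
  have hrt : 0 < r.toReal := ENNReal.toReal_pos hr0 hr
  have hle : p.toReal ≤ r.toReal := ENNReal.toReal_mono hr hpr
  set N := eLpNorm a p Measure.count with hN
  have hNp : N ^ p.toReal = ∑' k, a k ^ p.toReal := by
    rw [hN, eLpNorm_eq_lintegral_rpow_enorm_toReal hp0 hp, ← ENNReal.rpow_mul,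
      one_div_mul_cancel hpt.ne', ENNReal.rpow_one, lintegral_count]
    simp
  have hk : ∀ k, a k ≤ N := fun k => by
    simpa using enorm_le_eLpNorm_count a k hp0
  rw [eLpNorm_eq_lintegral_rpow_enorm_toReal hr0 hr, lintegral_count]
  simp only [enorm_eq_self]
  calc (∑' k, a k ^ r.toReal) ^ (1 / r.toReal)
      ≤ (∑' k, N ^ (r.toReal - p.toReal) * a k ^ p.toReal) ^ (1 / r.toReal) := by
        refine ENNReal.rpow_le_rpow (ENNReal.tsum_le_tsum fun k => ?_) (by positivity)
        calc a k ^ r.toReal = a k ^ (r.toReal - p.toReal) * a k ^ p.toReal := by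
              rw [← ENNReal.rpow_add_of_nonneg _ _ (by linarith) hpt.le]; congr 1; ring
          _ ≤ _ := by gcongr; exact hk k
    _ = N := by
        rw [ENNReal.tsum_mul_left, ← hNp, ← ENNReal.rpow_add_of_nonneg _ _ (by linarith) hpt.le,
          sub_add_cancel, ← ENNReal.rpow_mul, mul_one_div_cancel hrt.ne', ENNReal.rpow_one]

/-- The amalgam space embeds in `L^r` for `p ≤ r ≤ q`: Hölder on the cubes, which have measure one,
raises the local exponent from `r` to `q`, and `ℓ^p ⊆ ℓ^r`. -/
theorem eLpNorm_le_amalgam {d : ℕ} {q p r : ℝ≥0∞} (hp0 : p ≠ 0) (hpr : p ≤ r) (hrq : r ≤ q)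
    (hr : r ≠ ∞) {g : (Fin d → ℝ) → ℂ} (hg : AEStronglyMeasurable g volume) :
    eLpNorm g r volume ≤ amalgamNorm d q p 1 g := by
  have hr0 : r ≠ 0 := fun h => hp0 (le_zero_iff.1 (h ▸ hpr))
  have hrt : 0 < r.toReal := ENNReal.toReal_pos hr0 hr
  rw [amalgam_eq hp0 (ne_top_of_le_ne_top hr hpr)]
  refine le_trans ?_ (eLpNorm_count_mono_exp hp0 hpr hr)
  rw [eLpNorm_eq_lintegral_rpow_enorm_toReal hr0 hr,
    eLpNorm_eq_lintegral_rpow_enorm_toReal hr0 hr, lintegral_count, lintegral_cubes]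
  simp only [enorm_eq_self]
  refine ENNReal.rpow_le_rpow (ENNReal.tsum_le_tsum fun k => ?_) (by positivity)
  have h := eLpNorm_le_eLpNorm_of_exponent_le (μ := volume.restrict (cube d 1 k)) hrq hg.restrict
  have h2 := ENNReal.rpow_le_rpow h hrt.le
  rwa [eLpNorm_eq_lintegral_rpow_enorm_toReal hr0 hr, ← ENNReal.rpow_mul,
    one_div_mul_cancel hrt.ne', ENNReal.rpow_one] at h2

/-! ### Translations on the amalgam space -/

theorem eLpNorm_count_add_right {d : ℕ} {p : ℝ≥0∞} (hp0 : p ≠ 0) (hp : p ≠ ∞)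
    (a : (Fin d → ℤ) → ℝ≥0∞) (m : Fin d → ℤ) :
    eLpNorm (fun k => a (k + m)) p Measure.count = eLpNorm a p Measure.count := by
  simp only [eLpNorm_eq_lintegral_rpow_enorm_toReal hp0 hp, lintegral_count, enorm_eq_self]
  rw [(Equiv.addRight m).tsum_eq (fun k => a k ^ p.toReal) |>.symm]
  rfl

theorem measurePreserving_tr {d : ℕ} (y : Fin d → ℝ) :
    MeasurePreserving (fun x : Fin d → ℝ => x - y) volume volume :=
  measurePreserving_sub_right volume y

/-- The multi-indices with all coordinates in `s`. With `s = {0, 1}` they number the cubes that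
can meet a translated unit cube. -/
def offs (d : ℕ) (s : Finset ℤ) : Finset (Fin d → ℤ) := Fintype.piFinset fun _ => s

/-- The cube `I_k` translated by `-y` is covered by the `2^d` cubes `I_{k + ⌊-y⌋ + j}`,
`j ∈ {0, 1}^d`. -/
theorem locNorm_tr_le {d : ℕ} {q : ℝ≥0∞} (hq : 1 ≤ q) {g : (Fin d → ℝ) → ℂ}
    (hg : Measurable g) (y : Fin d → ℝ) (k : Fin d → ℤ) :
    locNorm d q (fun x => g (x - y)) k ≤
      ∑ j ∈ offs d {0, 1}, locNorm d q g (k + ((fun i => ⌊-y i⌋) + j)) := by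
  set S : Set (Fin d → ℝ) := (fun x => x + y) ⁻¹' cube d 1 k with hS
  have hSm : MeasurableSet S := measurableSet_cube d k |>.preimage (measurable_id.add_const y)
  have hpre : (fun x => x - y) ⁻¹' S = cube d 1 k := by
    ext x; simp [hS]
  have h1 : locNorm d q (fun x => g (x - y)) k = eLpNorm (S.indicator g) q volume := by
    have := (measurePreserving_tr y).restrict_preimage hSm
    rw [hpre] at this
    rw [eLpNorm_indicator_eq_eLpNorm_restrict hSm]
    exact eLpNorm_comp_measurePreserving hg.aestronglyMeasurable this
  rw [h1]
  have h2 : eLpNorm (S.indicator g) q volume ≤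
      eLpNorm (∑ j ∈ offs d {0, 1},
        fun x => (cube d 1 (k + ((fun i => ⌊-y i⌋) + j))).indicator (fun x => ‖g x‖ₑ) x) q volume := by
    refine eLpNorm_mono_enorm fun x => ?_
    simp only [Finset.sum_apply, enorm_eq_self]
    by_cases hx : x ∈ S
    · rw [Set.indicator_of_mem hx]
      have hx' := mem_cube_iff.1 (show x + y ∈ cube d 1 k from hx)
      let j : Fin d → ℤ := fun i => ⌊x i⌋ - k i - ⌊-y i⌋
      have hj : j ∈ offs d {0, 1} := by
        refine Fintype.mem_piFinset.2 fun i => ?_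
        have e : x i = (x + y) i + (-y i) := by simp
        have l1 := Int.le_floor_add ((x + y) i) (-y i)
        have l2 := Int.le_floor_add_floor ((x + y) i) (-y i)
        rw [← e, hx' i] at l1 l2
        simp only [Finset.mem_insert, Finset.mem_singleton, j]
        omega
      have hxj : x ∈ cube d 1 (k + ((fun i => ⌊-y i⌋) + j)) :=
        mem_cube_iff.2 fun i => by simp [j]
      have := Finset.single_le_sum (f := fun j =>
        (cube d 1 (k + ((fun i => ⌊-y i⌋) + j))).indicator (fun x => ‖g x‖ₑ) x)
        (fun _ _ => zero_le) hj
      simpa [Set.indicator_of_mem hxj] using this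
    · simp [Set.indicator_of_notMem hx]
  refine h2.trans ((eLpNorm_sum_le (fun j _ => ?_) hq).trans (le_of_eq ?_))
  · exact (hg.enorm.indicator (measurableSet_cube _ _)).aestronglyMeasurable
  · refine Finset.sum_congr rfl fun j _ => ?_
    rw [eLpNorm_indicator_eq_eLpNorm_restrict (f := fun x => ‖g x‖ₑ) (measurableSet_cube _ _)]
    exact eLpNorm_enorm g

/-- The `ℓ^p` norm is invariant under shifts, so a sum of `s.card` shifts of `a` costs `s.card`. -/
theorem eLpNorm_sum_shift_le {d : ℕ} {p : ℝ≥0∞} (hp1 : 1 ≤ p) (hp : p ≠ ∞)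
    {ι : Type*} (s : Finset ι) (m : ι → Fin d → ℤ) (a : (Fin d → ℤ) → ℝ≥0∞) :
    eLpNorm (fun k => ∑ j ∈ s, a (k + m j)) p Measure.count ≤
      s.card * eLpNorm a p Measure.count := by
  have hp0 : p ≠ 0 := (zero_lt_one.trans_le hp1).ne'
  have : (fun k => ∑ j ∈ s, a (k + m j)) = ∑ j ∈ s, fun k => a (k + m j) := by
    ext k; simp
  rw [this]
  refine (eLpNorm_sum_le (fun j _ => (Measurable.of_discrete).aestronglyMeasurable) hp1).trans
    (le_of_eq ?_)
  simp [eLpNorm_count_add_right hp0 hp]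

/-- Translations are bounded on the amalgam space by `2^d`, uniformly in `y`. -/
theorem amalgam_tr_le {d : ℕ} {q p : ℝ≥0∞} (hq : 1 ≤ q) (hp1 : 1 ≤ p) (hp : p ≠ ∞)
    {g : (Fin d → ℝ) → ℂ} (hg : Measurable g) (y : Fin d → ℝ) :
    amalgamNorm d q p 1 (fun x => g (x - y)) ≤
      (offs d {0, 1}).card * amalgamNorm d q p 1 g := by
  have hp0 : p ≠ 0 := (zero_lt_one.trans_le hp1).ne'
  rw [amalgam_eq hp0 hp, amalgam_eq hp0 hp]
  refine le_trans (eLpNorm_mono_enorm fun k => ?_)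
    (eLpNorm_sum_shift_le hp1 hp (offs d {0, 1}) (fun j => (fun i => ⌊-y i⌋) + j) _)
  simpa using locNorm_tr_le hq hg y k

theorem amalgam_sub_le {d : ℕ} {q p : ℝ≥0∞} (hq : 1 ≤ q) (hp1 : 1 ≤ p) (hp : p ≠ ∞)
    {g h : (Fin d → ℝ) → ℂ} (hg : Measurable g) (hh : Measurable h) :
    amalgamNorm d q p 1 (g - h) ≤ amalgamNorm d q p 1 g + amalgamNorm d q p 1 h := by
  have hp0 : p ≠ 0 := (zero_lt_one.trans_le hp1).ne'
  simp only [amalgam_eq hp0 hp]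
  refine le_trans (eLpNorm_mono_enorm (g := locNorm d q g + locNorm d q h) fun k => ?_)
    (eLpNorm_add_le (Measurable.of_discrete).aestronglyMeasurable
      (Measurable.of_discrete).aestronglyMeasurable hp1)
  simp only [enorm_eq_self, Pi.add_apply]
  exact eLpNorm_sub_le hg.aestronglyMeasurable hh.aestronglyMeasurable hq

/-- Strong continuity of translations in `L^q`, `q < ∞`. -/
theorem tendsto_eLpNorm_tr {d : ℕ} {q : ℝ≥0∞} (hq : 1 ≤ q) (hqt : q ≠ ∞)
    {g : (Fin d → ℝ) → ℂ} (hg : MemLp g q volume) :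
    Tendsto (fun y : Fin d → ℝ => eLpNorm ((fun x => g (x - y)) - g) q volume) (𝓝 0) (𝓝 0) := by
  have : Fact (1 ≤ q) := ⟨hq⟩
  let τ : (Fin d → ℝ) → C(Fin d → ℝ, Fin d → ℝ) :=
    fun y => ⟨fun x => x - y, by fun_prop⟩
  have hτ : Continuous τ := by
    refine ContinuousMap.continuous_of_continuous_uncurry _ ?_
    change Continuous fun p : (Fin d → ℝ) × (Fin d → ℝ) => p.2 - p.1
    fun_prop
  have h := Filter.Tendsto.compMeasurePreservingLp (μ := (volume : Measure (Fin d → ℝ)))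
    (ν := (volume : Measure (Fin d → ℝ))) (p := q) (l := 𝓝 (0 : Fin d → ℝ))
    (f := fun _ => hg.toLp g) (f₀ := hg.toLp g) (g := τ) (g₀ := τ 0) tendsto_const_nhds
    (hτ.tendsto 0) (fun y => measurePreserving_tr y) (measurePreserving_tr 0) hqt
  rw [tendsto_iff_edist_tendsto_0] at h
  refine h.congr fun y => ?_
  rw [Lp.edist_def]
  refine eLpNorm_congr_ae ?_
  have e := hg.coeFn_toLp
  refine EventuallyEq.sub ?_ ?_
  · refine (Lp.coeFn_compMeasurePreserving _ (measurePreserving_tr y)).trans ?_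
    exact (measurePreserving_tr y).quasiMeasurePreserving.ae_eq_comp e
  · refine (Lp.coeFn_compMeasurePreserving _ (measurePreserving_tr 0)).trans ?_
    refine ((measurePreserving_tr 0).quasiMeasurePreserving.ae_eq_comp e).trans ?_
    refine Eventually.of_forall fun x => ?_
    simp

/-- Strong continuity of translations in the amalgam space, for finite exponents: each local norm
tends to zero by continuity in `L^q`, and dominated convergence for the sum over the cubes
applies because, for `|y| < 1`, the local norm on `I_k` only involves a fixed finite set of
neighbours of `I_k`. -/
theorem tendsto_amalgam_tr {d : ℕ} {q p : ℝ≥0∞} (hp1 : 1 ≤ p) (hpq : p ≤ q) (hqt : q ≠ ∞)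
    {g : (Fin d → ℝ) → ℂ} (hg : Measurable g) (hN : amalgamNorm d q p 1 g ≠ ∞) :
    Tendsto (fun y : Fin d → ℝ => amalgamNorm d q p 1 ((fun x => g (x - y)) - g)) (𝓝 0) (𝓝 0) := by
  have hp0 : p ≠ 0 := (zero_lt_one.trans_le hp1).ne'
  have hp : p ≠ ∞ := ne_top_of_le_ne_top hqt hpq
  have hpt : 0 < p.toReal := ENNReal.toReal_pos hp0 hp
  have hq : 1 ≤ q := hp1.trans hpq
  have hmem : MemLp g q volume := ⟨hg.aestronglyMeasurable,
    (eLpNorm_le_amalgam hp0 hpq le_rfl hqt hg.aestronglyMeasurable).trans_lt hN.lt_top⟩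
  set a := locNorm d q g with ha
  let T := offs d {-1, 0} ×ˢ offs d {0, 1}
  let b : (Fin d → ℤ) → ℝ≥0∞ := (fun k => ∑ j ∈ T, a (k + (j.1 + j.2))) + a
  have hb : eLpNorm b p Measure.count < ∞ := by
    rw [amalgam_eq hp0 hp] at hN
    refine (eLpNorm_add_le (Measurable.of_discrete).aestronglyMeasurable
      (Measurable.of_discrete).aestronglyMeasurable hp1).trans_lt
      (ENNReal.add_lt_top.2 ⟨(eLpNorm_sum_shift_le hp1 hp T _ a).trans_lt
        (ENNReal.mul_lt_top (by simp) hN.lt_top), hN.lt_top⟩)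
  have hdom : ∀ᶠ y : Fin d → ℝ in 𝓝 0, ∀ k,
      locNorm d q ((fun x => g (x - y)) - g) k ≤ b k := by
    filter_upwards [Metric.ball_mem_nhds (0 : Fin d → ℝ) one_pos] with y hy k
    refine (eLpNorm_sub_le (hg.comp (measurable_id.sub_const y)).aestronglyMeasurable
      hg.aestronglyMeasurable hq).trans (add_le_add ?_ le_rfl)
    refine (locNorm_tr_le hq hg y k).trans ?_
    have hm : (fun i => ⌊-y i⌋) ∈ offs d {-1, 0} := by
      refine Fintype.mem_piFinset.2 fun i => ?_
      have h1 : |y i| < 1 := by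
        have := norm_le_pi_norm y i
        rw [Real.norm_eq_abs] at this
        exact this.trans_lt (by simpa using hy)
      rw [abs_lt] at h1
      have l1 : -1 ≤ ⌊-y i⌋ := by rw [Int.le_floor]; push_cast; linarith
      have l2 : ⌊-y i⌋ < 1 := by rw [Int.floor_lt]; push_cast; linarith
      simp only [Finset.mem_insert, Finset.mem_singleton]
      omega
    change _ ≤ ∑ j ∈ offs d {-1, 0} ×ˢ offs d {0, 1}, a (k + (j.1 + j.2))
    rw [Finset.sum_product]
    exact Finset.single_le_sum (f := fun m => ∑ j ∈ offs d {0, 1}, a (k + (m + j)))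
      (fun _ _ => zero_le) hm
  have hlim : Tendsto (fun y : Fin d → ℝ => ∫⁻ k : Fin d → ℤ,
      (locNorm d q ((fun x => g (x - y)) - g) k) ^ p.toReal ∂Measure.count) (𝓝 0)
      (𝓝 (∫⁻ _ : Fin d → ℤ, 0 ∂Measure.count)) := by
    refine tendsto_lintegral_filter_of_dominated_convergence (fun k => b k ^ p.toReal)
      (Eventually.of_forall fun y => Measurable.of_discrete) ?_ ?_ ?_
    · filter_upwards [hdom] with y hy
      exact Eventually.of_forall fun k => ENNReal.rpow_le_rpow (hy k) hpt.le
    · have := lintegral_rpow_enorm_lt_top_of_eLpNorm_lt_top hp0 hp hb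
      simpa using this.ne
    · refine Eventually.of_forall fun k => ?_
      have h0 : Tendsto (fun y : Fin d → ℝ => locNorm d q ((fun x => g (x - y)) - g) k)
          (𝓝 0) (𝓝 0) :=
        tendsto_of_tendsto_of_tendsto_of_le_of_le tendsto_const_nhds
          (tendsto_eLpNorm_tr hq hqt hmem) (fun _ => zero_le)
          (fun y => eLpNorm_mono_measure _ Measure.restrict_le_self)
      have := (ENNReal.continuous_rpow_const (y := p.toReal)).tendsto 0 |>.comp h0
      simpa [ENNReal.zero_rpow_of_pos hpt, Function.comp_def] using this
  have := (ENNReal.continuous_rpow_const (y := 1 / p.toReal)).tendsto _ |>.comp hlim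
  simp only [lintegral_zero, ENNReal.zero_rpow_of_pos (one_div_pos.2 hpt)] at this
  refine this.congr fun y => ?_
  rw [amalgam_eq hp0 hp, eLpNorm_eq_lintegral_rpow_enorm_toReal hp0 hp]
  simp

/-! ### Averages of translates -/

/-- The average `x ↦ ∫ g(x - ty) dν(y)` of translates of `g`. The integral is a Bochner integral,
hence equal to `0` at the points `x` where `y ↦ g(x - ty)` is not `ν`-integrable. -/
noncomputable def avg {d : ℕ} (ν : Measure (Fin d → ℝ)) (t : ℝ) (g : (Fin d → ℝ) → ℂ) :
    (Fin d → ℝ) → ℂ :=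
  fun x => ∫ y, g (x - t • y) ∂ν

theorem measurable_sub_smul {d : ℕ} (t : ℝ) :
    Measurable fun z : (Fin d → ℝ) × (Fin d → ℝ) => z.1 - t • z.2 :=
  measurable_fst.sub (measurable_snd.const_smul t)

theorem measurable_avg {d : ℕ} {ν : Measure (Fin d → ℝ)} [SFinite ν] {t : ℝ}
    {g : (Fin d → ℝ) → ℂ} (hg : Measurable g) : Measurable (avg ν t g) :=
  (StronglyMeasurable.integral_prod_right'
    (hg.comp (measurable_sub_smul t)).stronglyMeasurable).measurable

/-- The bound holds at every `x`: where `y ↦ g(x - ty)` is not integrable the right side is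
infinite, since `ν` is finite. -/
theorem enorm_avg_sub_le {d : ℕ} {ν : Measure (Fin d → ℝ)} [IsProbabilityMeasure ν] {t : ℝ}
    {g : (Fin d → ℝ) → ℂ} (hg : Measurable g) (x : Fin d → ℝ) :
    ‖(avg ν t g - g) x‖ₑ ≤ ∫⁻ y, ‖g (x - t • y) - g x‖ₑ ∂ν := by
  have hm : Measurable fun y : Fin d → ℝ => g (x - t • y) :=
    hg.comp (measurable_const.sub (measurable_id.const_smul t))
  by_cases h : Integrable (fun y => g (x - t • y)) ν
  · have e : (avg ν t g - g) x = ∫ y, (g (x - t • y) - g x) ∂ν := by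
      rw [integral_sub h (integrable_const _)]
      simp [avg]
    rw [e]
    exact enorm_integral_le_lintegral_enorm _
  · have : ∫⁻ y, ‖g (x - t • y) - g x‖ₑ ∂ν = ∞ := by
      by_contra hne
      refine h ?_
      have h2 : Integrable (fun y => g (x - t • y) - g x) ν :=
        ⟨(hm.sub_const _).aestronglyMeasurable, lt_top_iff_ne_top.2 hne⟩
      exact (h2.add (integrable_const (g x))).congr (ae_of_all _ fun y => by simp)
    rw [this]
    exact le_top

/-- Minkowski's inequality on a cube. -/
theorem locNorm_avg_sub_le {d : ℕ} {ν : Measure (Fin d → ℝ)} [IsProbabilityMeasure ν] {t : ℝ}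
    {q : ℝ≥0∞} (hq : 1 ≤ q) (hqt : q ≠ ∞)
    {g : (Fin d → ℝ) → ℂ} (hg : Measurable g) (hgq : eLpNorm g q volume ≠ ∞) (k : Fin d → ℤ) :
    locNorm d q (avg ν t g - g) k ≤
      ∫⁻ y, locNorm d q ((fun x => g (x - t • y)) - g) k ∂ν := by
  have hq0 : q ≠ 0 := (zero_lt_one.trans_le hq).ne'
  have hq1 : 1 ≤ q.toReal := by
    simpa using ENNReal.toReal_mono hqt hq
  have hqp : 0 < q.toReal := by linarith
  have hFm : Measurable (Function.uncurry fun (x y : Fin d → ℝ) => ‖g (x - t • y) - g x‖ₑ) :=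
    ((hg.comp (measurable_sub_smul t)).sub (hg.comp measurable_fst)).enorm
  have hloc : ∀ y, ∫⁻ x in cube d 1 k, ‖g (x - t • y) - g x‖ₑ ^ q.toReal =
      locNorm d q ((fun x => g (x - t • y)) - g) k ^ q.toReal := fun y => by
    rw [locNorm, eLpNorm_eq_lintegral_rpow_enorm_toReal hq0 hqt, ← ENNReal.rpow_mul,
      one_div_mul_cancel hqp.ne', ENNReal.rpow_one]
    rfl
  -- The finiteness required by Minkowski: Jensen, Fubini and translation invariance of `L^q`.
  have hfin : ∫⁻ x in cube d 1 k, (∫⁻ y, ‖g (x - t • y) - g x‖ₑ ∂ν) ^ q.toReal ≠ ∞ := by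
    refine ne_top_of_le_ne_top (b := (eLpNorm g q volume + eLpNorm g q volume) ^ q.toReal)
      (ENNReal.rpow_ne_top_of_nonneg hqp.le (by simp [hgq])) ?_
    calc _ ≤ ∫⁻ x in cube d 1 k, ∫⁻ y, ‖g (x - t • y) - g x‖ₑ ^ q.toReal ∂ν :=
          lintegral_mono fun x => lintegral_rpow_le_of_prob ν hq1
            (hFm.comp (measurable_const.prodMk measurable_id)).aemeasurable
      _ = ∫⁻ y, (∫⁻ x in cube d 1 k, ‖g (x - t • y) - g x‖ₑ ^ q.toReal) ∂ν :=
          lintegral_lintegral_swap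
            (f := fun x y : Fin d → ℝ => ‖g (x - t • y) - g x‖ₑ ^ q.toReal)
            (hFm.pow_const _).aemeasurable
      _ ≤ ∫⁻ _, (eLpNorm g q volume + eLpNorm g q volume) ^ q.toReal ∂ν := by
          refine lintegral_mono fun y => ?_
          rw [hloc]
          refine ENNReal.rpow_le_rpow ?_ hqp.le
          refine (eLpNorm_mono_measure _ Measure.restrict_le_self).trans ?_
          refine (eLpNorm_sub_le (hg.comp (measurable_id.sub_const _)).aestronglyMeasurable
            hg.aestronglyMeasurable hq).trans (le_of_eq ?_)
          congr 1
          exact eLpNorm_comp_measurePreserving hg.aestronglyMeasurable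
            (measurePreserving_tr (t • y))
      _ = _ := by simp
  have h := minkowski_lintegral (volume.restrict (cube d 1 k)) ν hq1 hFm hfin
  simp only [hloc, ← ENNReal.rpow_mul, mul_one_div_cancel hqp.ne', ENNReal.rpow_one] at h
  refine le_trans ?_ h
  rw [locNorm, eLpNorm_eq_lintegral_rpow_enorm_toReal hq0 hqt]
  gcongr with x
  exact enorm_avg_sub_le hg x

theorem measurable_locNorm_tr {d : ℕ} {q : ℝ≥0∞} (hq0 : q ≠ 0) (hqt : q ≠ ∞)
    {g : (Fin d → ℝ) → ℂ} (hg : Measurable g) (k : Fin d → ℤ) :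
    Measurable fun y : Fin d → ℝ => locNorm d q ((fun x => g (x - y)) - g) k := by
  simp only [locNorm, eLpNorm_eq_lintegral_rpow_enorm_toReal hq0 hqt]
  refine Measurable.pow_const ?_ _
  refine Measurable.lintegral_prod_right' (f := fun z : (Fin d → ℝ) × (Fin d → ℝ) =>
    ‖g (z.2 - z.1) - g z.2‖ₑ ^ q.toReal) ?_
  exact (((hg.comp (measurable_snd.sub measurable_fst)).sub
    (hg.comp measurable_snd)).enorm).pow_const _

theorem amalgam_rpow {d : ℕ} {q p : ℝ≥0∞} (hp0 : p ≠ 0) (hp : p ≠ ∞) (f : (Fin d → ℝ) → ℂ) :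
    amalgamNorm d q p 1 f ^ p.toReal = ∑' k, locNorm d q f k ^ p.toReal := by
  rw [amalgam_eq hp0 hp, eLpNorm_eq_lintegral_rpow_enorm_toReal hp0 hp, ← ENNReal.rpow_mul,
    one_div_mul_cancel (ENNReal.toReal_pos hp0 hp).ne', ENNReal.rpow_one, lintegral_count]
  simp

/-- Minkowski on each cube followed by Jensen for the exponent `p` and Tonelli for the sum over the
cubes. -/
theorem amalgam_avg_sub_rpow_le {d : ℕ} {ν : Measure (Fin d → ℝ)} [IsProbabilityMeasure ν] {t : ℝ}
    {q p : ℝ≥0∞} (hp1 : 1 ≤ p) (hpq : p ≤ q) (hqt : q ≠ ∞)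
    {g : (Fin d → ℝ) → ℂ} (hg : Measurable g) (hN : amalgamNorm d q p 1 g ≠ ∞) :
    amalgamNorm d q p 1 (avg ν t g - g) ^ p.toReal ≤
      ∫⁻ y, amalgamNorm d q p 1 ((fun x => g (x - t • y)) - g) ^ p.toReal ∂ν := by
  have hp0 : p ≠ 0 := (zero_lt_one.trans_le hp1).ne'
  have hp : p ≠ ∞ := ne_top_of_le_ne_top hqt hpq
  have hp1' : 1 ≤ p.toReal := by simpa using ENNReal.toReal_mono hp hp1
  have hq : 1 ≤ q := hp1.trans hpq
  have hq0 : q ≠ 0 := (zero_lt_one.trans_le hq).ne'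
  have hgq := ne_top_of_le_ne_top hN (eLpNorm_le_amalgam hp0 hpq le_rfl hqt hg.aestronglyMeasurable)
  have hm : ∀ k, Measurable fun y => locNorm d q ((fun x => g (x - t • y)) - g) k := fun k =>
    (measurable_locNorm_tr hq0 hqt hg k).comp (measurable_id.const_smul t)
  simp only [amalgam_rpow hp0 hp]
  rw [lintegral_tsum fun k => ((hm k).pow_const _).aemeasurable]
  refine ENNReal.tsum_le_tsum fun k => ?_
  refine (ENNReal.rpow_le_rpow (locNorm_avg_sub_le hq hqt hg hgq k) (by linarith)).trans ?_
  exact lintegral_rpow_le_of_prob ν hp1' (hm k).aemeasurable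

/-- On the unit ball, `g ↦ avg ν t g - g` is bounded by `2^d + 1`, uniformly in `t`. -/
theorem amalgam_avg_sub_le {d : ℕ} {ν : Measure (Fin d → ℝ)} [IsProbabilityMeasure ν] {t : ℝ}
    {q p : ℝ≥0∞} (hp1 : 1 ≤ p) (hpq : p ≤ q) (hqt : q ≠ ∞)
    {g : (Fin d → ℝ) → ℂ} (hg : Measurable g) (hN : amalgamNorm d q p 1 g ≤ 1) :
    amalgamNorm d q p 1 (avg ν t g - g) ≤ (offs d {0, 1}).card + 1 := by
  have hp0 : p ≠ 0 := (zero_lt_one.trans_le hp1).ne'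
  have hp : p ≠ ∞ := ne_top_of_le_ne_top hqt hpq
  have hpt : 0 < p.toReal := ENNReal.toReal_pos hp0 hp
  rw [← ENNReal.rpow_le_rpow_iff hpt]
  refine (amalgam_avg_sub_rpow_le hp1 hpq hqt hg (ne_top_of_le_ne_top (by simp) hN)).trans ?_
  calc _ ≤ ∫⁻ _, (((offs d {0, 1}).card : ℝ≥0∞) + 1) ^ p.toReal ∂ν := by
        refine lintegral_mono fun y => ENNReal.rpow_le_rpow ?_ hpt.le
        refine (amalgam_sub_le (hp1.trans hpq) hp1 hp
          (hg.comp (measurable_id.sub_const _)) hg).trans (add_le_add ?_ hN)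
        refine (amalgam_tr_le (hp1.trans hpq) hp1 hp hg (t • y)).trans ?_
        calc _ ≤ ((offs d {0, 1}).card : ℝ≥0∞) * 1 := by gcongr
          _ = _ := mul_one _
    _ = _ := by simp

/-- Averages at scale `t → 0` converge in the amalgam norm. -/
theorem tendsto_amalgam_avg {d : ℕ} {ν : Measure (Fin d → ℝ)} [IsProbabilityMeasure ν]
    {q p : ℝ≥0∞} (hp1 : 1 ≤ p) (hpq : p ≤ q) (hqt : q ≠ ∞)
    {g : (Fin d → ℝ) → ℂ} (hg : Measurable g) (hN : amalgamNorm d q p 1 g ≤ 1) :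
    Tendsto (fun t : ℝ => amalgamNorm d q p 1 (avg ν t g - g)) (𝓝 0) (𝓝 0) := by
  have hp0 : p ≠ 0 := (zero_lt_one.trans_le hp1).ne'
  have hp : p ≠ ∞ := ne_top_of_le_ne_top hqt hpq
  have hpt : 0 < p.toReal := ENNReal.toReal_pos hp0 hp
  have hq : 1 ≤ q := hp1.trans hpq
  have hq0 : q ≠ 0 := (zero_lt_one.trans_le hq).ne'
  have hN' := ne_top_of_le_ne_top (by simp) hN
  have hlim : Tendsto (fun t : ℝ =>
      ∫⁻ y, amalgamNorm d q p 1 ((fun x => g (x - t • y)) - g) ^ p.toReal ∂ν) (𝓝 0)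
      (𝓝 (∫⁻ _, 0 ∂ν)) := by
    refine tendsto_lintegral_filter_of_dominated_convergence
      (fun _ => (((offs d {0, 1}).card : ℝ≥0∞) + 1) ^ p.toReal) ?_ ?_ ?_ ?_
    · refine Eventually.of_forall fun t => ?_
      simp only [amalgam_rpow hp0 hp]
      exact Measurable.tsum fun k =>
        ((measurable_locNorm_tr hq0 hqt hg k).comp (measurable_id.const_smul t)).pow_const _
    · refine Eventually.of_forall fun t => Eventually.of_forall fun y => ?_
      refine ENNReal.rpow_le_rpow ?_ hpt.le
      refine (amalgam_sub_le hq hp1 hp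
          (hg.comp (measurable_id.sub_const _)) hg).trans (add_le_add ?_ hN)
      refine (amalgam_tr_le hq hp1 hp hg (t • y)).trans ?_
      calc _ ≤ ((offs d {0, 1}).card : ℝ≥0∞) * 1 := by gcongr
        _ = _ := mul_one _
    · simp [ENNReal.rpow_eq_top_iff]
    · refine Eventually.of_forall fun y => ?_
      have h1 : Tendsto (fun t : ℝ => t • y) (𝓝 0) (𝓝 0) := by
        have : Continuous fun t : ℝ => t • y := by fun_prop
        simpa using this.tendsto 0
      have h0 := (tendsto_amalgam_tr hp1 hpq hqt hg hN').comp h1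
      have := (ENNReal.continuous_rpow_const (y := p.toReal)).tendsto 0 |>.comp h0
      simpa [ENNReal.zero_rpow_of_pos hpt, Function.comp_def] using this
  have := (ENNReal.continuous_rpow_const (y := 1 / p.toReal)).tendsto _ |>.comp hlim
  simp only [lintegral_zero, ENNReal.zero_rpow_of_pos (one_div_pos.2 hpt)] at this
  refine tendsto_of_tendsto_of_tendsto_of_le_of_le tendsto_const_nhds this (fun _ => zero_le)
    fun t => ?_
  have h := ENNReal.rpow_le_rpow (amalgam_avg_sub_rpow_le (ν := ν) (t := t) hp1 hpq hqt hg hN')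
    (one_div_nonneg.2 hpt.le)
  rwa [← ENNReal.rpow_mul, mul_one_div_cancel hpt.ne', ENNReal.rpow_one] at h

/-! ### Dilations and convergence in `L^1_loc` -/

theorem amalgam_smul {d : ℕ} {q p : ℝ≥0∞} (hp0 : p ≠ 0) (hp : p ≠ ∞) (r : ℝ)
    (h : (Fin d → ℝ) → ℂ) :
    amalgamNorm d q p 1 (r • h) = ‖r‖ₑ * amalgamNorm d q p 1 h := by
  have hpt : 0 < p.toReal := ENNReal.toReal_pos hp0 hp
  refine ENNReal.rpow_left_injective hpt.ne' ?_
  change amalgamNorm d q p 1 (r • h) ^ p.toReal = (‖r‖ₑ * amalgamNorm d q p 1 h) ^ p.toReal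
  rw [ENNReal.mul_rpow_of_nonneg _ _ hpt.le, amalgam_rpow hp0 hp, amalgam_rpow hp0 hp,
    ← ENNReal.tsum_mul_left]
  refine tsum_congr fun k => ?_
  rw [← ENNReal.mul_rpow_of_nonneg _ _ hpt.le]
  congr 1
  exact eLpNorm_const_smul r h q _

theorem amalgam_congr {d : ℕ} {q p : ℝ≥0∞} (hp0 : p ≠ 0) (hp : p ≠ ∞)
    {g h : (Fin d → ℝ) → ℂ} (e : g =ᵐ[volume] h) :
    amalgamNorm d q p 1 g = amalgamNorm d q p 1 h := by
  rw [amalgam_eq hp0 hp, amalgam_eq hp0 hp]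
  congr 1
  funext k
  exact eLpNorm_congr_ae (ae_restrict_of_ae e)

theorem measurable_St {d : ℕ} {α : ℝ≥0∞} {ρ : ℝ} {g : (Fin d → ℝ) → ℂ} (hg : Measurable g) :
    Measurable (St d α ρ g) :=
  (hg.comp (measurable_id.const_smul ρ⁻¹)).const_smul (ρ ^ (-(d : ℝ) * (1 / α).toReal) : ℝ)

/-- Nonzero dilations preserve null sets. -/
theorem quasi_smul {d : ℕ} {r : ℝ} (hr : r ≠ 0) :
    Measure.QuasiMeasurePreserving (fun x : Fin d → ℝ => r • x) volume volume := by
  refine ⟨measurable_id.const_smul r, ?_⟩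
  rw [Measure.map_addHaar_smul volume hr]
  exact Measure.AbsolutelyContinuous.rfl.smul_left _

theorem St_congr {d : ℕ} {α : ℝ≥0∞} {ρ : ℝ} (hρ : 0 < ρ) {g h : (Fin d → ℝ) → ℂ}
    (e : g =ᵐ[volume] h) : St d α ρ g =ᵐ[volume] St d α ρ h := by
  filter_upwards [(quasi_smul (d := d) (inv_ne_zero hρ.ne')).ae e] with x hx
  simp only [St, hx]

/-- `St^{(α)}_ρ` is an isometry of `L^α`. -/
theorem eLpNorm_St {d : ℕ} {α : ℝ≥0∞} (hα0 : α ≠ 0) (hα : α ≠ ∞) {ρ : ℝ} (hρ : 0 < ρ)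
    {g : (Fin d → ℝ) → ℂ} (hg : Measurable g) :
    eLpNorm (St d α ρ g) α volume = eLpNorm g α volume := by
  have hat : 0 < α.toReal := ENNReal.toReal_pos hα0 hα
  rw [eLpNorm_eq_lintegral_rpow_enorm_toReal hα0 hα, eLpNorm_eq_lintegral_rpow_enorm_toReal hα0 hα]
  congr 1
  simp only [St, enorm_smul, ENNReal.mul_rpow_of_nonneg _ _ hat.le]
  have hm : Measurable fun x => ‖g x‖ₑ ^ α.toReal := hg.enorm.pow_const _
  have hm' : Measurable fun x : Fin d → ℝ => ‖g (ρ⁻¹ • x)‖ₑ ^ α.toReal :=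
    hm.comp (measurable_const_smul ρ⁻¹)
  rw [lintegral_const_mul _ hm']
  have h1 := lintegral_map (μ := (volume : Measure (Fin d → ℝ))) hm (measurable_const_smul ρ⁻¹)
  rw [Measure.map_addHaar_smul volume (inv_ne_zero hρ.ne'), lintegral_smul_measure] at h1
  rw [← h1, smul_eq_mul, ← mul_assoc]
  have e : ‖(ρ ^ (-(d : ℝ) * (1 / α).toReal) : ℝ)‖ₑ ^ α.toReal *
      ENNReal.ofReal |((ρ⁻¹) ^ Module.finrank ℝ (Fin d → ℝ))⁻¹| = 1 := by
    rw [Real.enorm_eq_ofReal (by positivity), ENNReal.ofReal_rpow_of_nonneg (by positivity) hat.le,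
      ← Real.rpow_mul hρ.le, ← ENNReal.ofReal_mul (by positivity), abs_of_pos (by positivity)]
    have : -(d : ℝ) * (1 / α).toReal * α.toReal = -(d : ℝ) := by
      rw [one_div, ENNReal.toReal_inv, mul_assoc, inv_mul_cancel₀ hat.ne', mul_one]
    rw [this, Real.rpow_neg hρ.le, Real.rpow_natCast]
    simp [hρ.ne']
  rw [e, one_mul]

/-- Hölder on `K`, with a bound independent of the translation. -/
theorem lintegral_compact_tr_le {d : ℕ} {r : ℝ≥0∞} (hr : 1 ≤ r) {u : (Fin d → ℝ) → ℂ}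
    (hu : Measurable u) (K : Set (Fin d → ℝ)) (y : Fin d → ℝ) :
    ∫⁻ x in K, ‖u (x - y)‖ₑ ≤ eLpNorm u r volume * volume K ^ (1 - 1 / r.toReal) := by
  have hm : Measurable fun x => u (x - y) := hu.comp (measurable_id.sub_const y)
  rw [← eLpNorm_one_eq_lintegral_enorm]
  refine (eLpNorm_le_eLpNorm_mul_rpow_measure_univ hr hm.aestronglyMeasurable).trans ?_
  simp only [Measure.restrict_apply_univ, ENNReal.toReal_one, div_one]
  gcongr
  refine (eLpNorm_mono_measure _ Measure.restrict_le_self).trans (le_of_eq ?_)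
  exact eLpNorm_comp_measurePreserving hu.aestronglyMeasurable (measurePreserving_tr y)

theorem ae_of_compact {d : ℕ} {P : (Fin d → ℝ) → Prop}
    (h : ∀ K : Set (Fin d → ℝ), IsCompact K → ∀ᵐ x ∂(volume.restrict K), P x) :
    ∀ᵐ x : Fin d → ℝ, P x := by
  have : ∀ᵐ x : Fin d → ℝ, ∀ n : ℕ, x ∈ Metric.closedBall (0 : Fin d → ℝ) n → P x := by
    refine ae_all_iff.2 fun n => ?_
    rw [← ae_restrict_iff' Metric.isClosed_closedBall.measurableSet]
    exact h _ (isCompact_closedBall _ _)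
  filter_upwards [this] with x hx
  obtain ⟨n, hn⟩ := exists_nat_ge ‖x‖
  exact hx n (by simpa using hn)

theorem ae_tsum_lt_top {d : ℕ} {v : ℕ → (Fin d → ℝ) → ℝ≥0∞} (hv : ∀ n, Measurable (v n))
    (h : ∀ K : Set (Fin d → ℝ), IsCompact K → ∑' n, ∫⁻ x in K, v n x ≠ ∞) :
    ∀ᵐ x : Fin d → ℝ, ∑' n, v n x < ∞ := by
  refine ae_of_compact fun K hK => ?_
  refine ae_lt_top (Measurable.tsum hv) ?_
  rw [lintegral_tsum fun n => (hv n).aemeasurable]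
  exact h K hK

/-- A series converging absolutely in `L^1(K)` for every compact `K` converges in `L^1_loc` to its
pointwise sum, which is locally integrable. -/
theorem series_L1loc {d : ℕ} {u : ℕ → (Fin d → ℝ) → ℂ} (hu : ∀ n, Measurable (u n))
    (h : ∀ K : Set (Fin d → ℝ), IsCompact K → ∑' n, ∫⁻ x in K, ‖u n x‖ₑ ≠ ∞) :
    (AEStronglyMeasurable (fun x => ∑' n, u n x) volume) ∧
    LocallyIntegrable (fun x => ∑' n, u n x) volume ∧
    ∀ K : Set (Fin d → ℝ), IsCompact K →
      Tendsto (fun m => ∫ x in K, ‖(∑ n ∈ Finset.range m, u n x) - ∑' n, u n x‖) atTop (𝓝 0) := by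
  set D : (Fin d → ℝ) → ℝ≥0∞ := fun x => ∑' n, ‖u n x‖ₑ with hD
  have hDm : Measurable D := Measurable.tsum fun n => (hu n).enorm
  have hDK : ∀ K : Set (Fin d → ℝ), IsCompact K → ∫⁻ x in K, D x ≠ ∞ := fun K hK => by
    rw [lintegral_tsum fun n => (hu n).enorm.aemeasurable]
    exact h K hK
  have hDfin : ∀ᵐ x : Fin d → ℝ, D x < ∞ := ae_tsum_lt_top (fun n => (hu n).enorm) h
  have hSm : ∀ m, Measurable fun x => ∑ n ∈ Finset.range m, u n x := fun m =>
    Finset.measurable_sum _ fun n _ => hu n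
  have hsum : ∀ᵐ x : Fin d → ℝ, Tendsto (fun m => ∑ n ∈ Finset.range m, u n x) atTop
      (𝓝 (∑' n, u n x)) := by
    filter_upwards [hDfin] with x hx
    exact (Summable.of_enorm hx.ne).tendsto_sum_tsum_nat
  have hFm : AEStronglyMeasurable (fun x => ∑' n, u n x) volume :=
    aestronglyMeasurable_of_tendsto_ae atTop (fun m => (hSm m).aestronglyMeasurable) hsum
  have hint : ∀ K : Set (Fin d → ℝ), IsCompact K →
      Integrable (fun x => (D x).toReal) (volume.restrict K) := fun K hK =>
    integrable_toReal_of_lintegral_ne_top hDm.aemeasurable (hDK K hK)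
  have hS : ∀ᵐ x : Fin d → ℝ, ∀ m, ‖∑ n ∈ Finset.range m, u n x‖ ≤ (D x).toReal := by
    filter_upwards [hDfin] with x hx m
    rw [← toReal_enorm]
    refine ENNReal.toReal_mono hx.ne ((enorm_sum_le _ _).trans (ENNReal.sum_le_tsum _))
  have hF : ∀ᵐ x : Fin d → ℝ, ‖∑' n, u n x‖ ≤ (D x).toReal := by
    filter_upwards [hsum, hS] with x hx hSx
    exact le_of_tendsto hx.norm (Eventually.of_forall hSx)
  refine ⟨hFm, ?_, fun K hK => ?_⟩
  · rw [locallyIntegrable_iff]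
    intro K hK
    exact (hint K hK).mono' hFm.restrict (ae_restrict_of_ae hF)
  · have := tendsto_integral_of_dominated_convergence (μ := volume.restrict K)
      (F := fun m x => ‖(∑ n ∈ Finset.range m, u n x) - ∑' n, u n x‖) (f := fun _ => (0 : ℝ))
      (fun x => (D x).toReal + (D x).toReal)
      (fun m => (((hSm m).aestronglyMeasurable.sub hFm).norm).restrict)
      ((hint K hK).add (hint K hK)) ?_ ?_
    · simpa using this
    · intro m
      refine ae_restrict_of_ae ?_
      filter_upwards [hS, hF] with x h1 h2
      rw [norm_norm]
      exact (norm_sub_le _ _).trans (add_le_add (h1 m) h2)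
    · refine ae_restrict_of_ae ?_
      filter_upwards [hsum] with x hx
      exact tendsto_iff_norm_sub_tendsto_zero.1 hx

/-- Limits in `L^1_loc` are unique almost everywhere. -/
theorem L1loc_unique {d : ℕ} {S : ℕ → (Fin d → ℝ) → ℂ} {f F : (Fin d → ℝ) → ℂ}
    (hS : ∀ m, LocallyIntegrable (S m) volume)
    (hf : LocallyIntegrable f volume) (hF : LocallyIntegrable F volume)
    (h1 : ∀ K : Set (Fin d → ℝ), IsCompact K →
      Tendsto (fun m => ∫ x in K, ‖S m x - f x‖) atTop (𝓝 0))
    (h2 : ∀ K : Set (Fin d → ℝ), IsCompact K →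
      Tendsto (fun m => ∫ x in K, ‖S m x - F x‖) atTop (𝓝 0)) : f =ᵐ[volume] F := by
  refine ae_of_compact fun K hK => ?_
  have hSi := fun m => (hS m).integrableOn_isCompact hK
  have hfi := hf.integrableOn_isCompact hK
  have hFi := hF.integrableOn_isCompact hK
  have i1 : ∀ m, Integrable (fun x => ‖S m x - f x‖) (volume.restrict K) := fun m =>
    Integrable.norm ((hSi m).sub hfi)
  have i2 : ∀ m, Integrable (fun x => ‖S m x - F x‖) (volume.restrict K) := fun m =>
    Integrable.norm ((hSi m).sub hFi)
  have i3 : Integrable (fun x => ‖f x - F x‖) (volume.restrict K) :=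
    Integrable.norm (hfi.sub hFi)
  have h0 : ∫ x in K, ‖f x - F x‖ = 0 := by
    refine le_antisymm ?_ (integral_nonneg fun x => norm_nonneg _)
    refine ge_of_tendsto' (by simpa using (h1 K hK).add (h2 K hK)) fun m => ?_
    rw [← integral_add (i1 m) (i2 m)]
    refine integral_mono i3 ((i1 m).add (i2 m)) fun x => ?_
    have : f x - F x = (S m x - F x) - (S m x - f x) := by ring
    simp only [this]
    exact (norm_sub_le _ _).trans (le_of_eq (add_comm _ _))
  rw [integral_eq_zero_iff_of_nonneg (fun x => norm_nonneg _) i3] at h0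
  filter_upwards [h0] with x hx
  simpa [sub_eq_zero] using hx

/-! ### Averages, series and dilations -/

/-- For absolutely continuous `ν` the average depends, at every point, only on the
almost-everywhere class of `f`. -/
theorem avg_congr {d : ℕ} {ν : Measure (Fin d → ℝ)} (hν : ν ≪ volume) {t : ℝ} (ht : t ≠ 0)
    {f F : (Fin d → ℝ) → ℂ} (e : f =ᵐ[volume] F) : avg ν t f = avg ν t F := by
  funext x
  refine integral_congr_ae (hν.ae_le ?_)
  have h1 := (Measure.measurePreserving_sub_left volume x).quasiMeasurePreserving.comp
    (quasi_smul (d := d) ht)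
  exact h1.ae e

/-- Convolution with `St^{(1)}_ε φ` is averaging against `φ dy` at scale `ε`, by the change of
variable `y = ε z`. No integrability of `f` is needed: if one side is not integrable, neither is
the other. -/
theorem conv_eq_avg {d : ℕ} {φ : (Fin d → ℝ) → ℝ} (hφ : Integrable φ volume)
    (hφ0 : ∀ x, 0 ≤ φ x) {ε : ℝ} (hε : 0 < ε) (f : (Fin d → ℝ) → ℂ) :
    (fun x => ∫ y, f (x - y) * ((ε ^ (-(d : ℝ)) * φ (ε⁻¹ • y) : ℝ) : ℂ)) =
      avg (volume.withDensity fun x => ENNReal.ofReal (φ x)) ε f := by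
  funext x
  have h1 := Measure.integral_comp_smul (volume : Measure (Fin d → ℝ))
    (fun z => f (x - ε • z) * ((ε ^ (-(d : ℝ)) * φ z : ℝ) : ℂ)) ε⁻¹
  have e1 : ∀ y : Fin d → ℝ, ε • ε⁻¹ • y = y := fun y => smul_inv_smul₀ hε.ne' y
  simp only [e1] at h1
  rw [h1, avg, integral_withDensity_eq_integral_toReal_smul₀ hφ.aemeasurable.ennreal_ofReal
    (Eventually.of_forall fun x => ENNReal.ofReal_lt_top), ← integral_smul]
  refine integral_congr_ae (Eventually.of_forall fun z => ?_)
  have hc : ε ^ d * ε ^ (-(d : ℝ)) = 1 := by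
    rw [Real.rpow_neg hε.le, Real.rpow_natCast]
    exact mul_inv_cancel₀ (by positivity)
  have e2 : |((ε⁻¹) ^ Module.finrank ℝ (Fin d → ℝ))⁻¹| = ε ^ d := by
    rw [abs_of_pos (by positivity)]; simp
  simp only [e2, ENNReal.toReal_ofReal (hφ0 z), Complex.real_smul]
  have hcc : ((ε ^ d : ℝ) : ℂ) * ((ε ^ (-(d : ℝ)) : ℝ) : ℂ) = 1 := by exact_mod_cast hc
  push_cast at hcc ⊢
  linear_combination f (x - ε • z) * φ z * hcc

/-- If `Σ ‖u_n‖_r < ∞`, then `Σ u_n` and `Σ (avg u_n - u_n)` converge absolutely in `L^1` on compact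
sets, and the second sum is `avg (Σ u_n) - Σ u_n` almost everywhere. -/
theorem avg_tsum {d : ℕ} {ν : Measure (Fin d → ℝ)} [IsProbabilityMeasure ν] {t : ℝ}
    {r : ℝ≥0∞} (hr : 1 ≤ r) {u : ℕ → (Fin d → ℝ) → ℂ} (hu : ∀ n, Measurable (u n))
    (hur : ∑' n, eLpNorm (u n) r volume ≠ ∞) :
    (∀ K : Set (Fin d → ℝ), IsCompact K → ∑' n, ∫⁻ x in K, ‖u n x‖ₑ ≠ ∞) ∧
    (∀ K : Set (Fin d → ℝ), IsCompact K → ∑' n, ∫⁻ x in K, ‖(avg ν t (u n) - u n) x‖ₑ ≠ ∞) ∧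
    (∀ᵐ x, ∑' n, (avg ν t (u n) - u n) x =
      (avg ν t (fun x => ∑' n, u n x) - fun x => ∑' n, u n x) x) := by
  set v : ℕ → (Fin d → ℝ) → ℝ≥0∞ := fun n x => ∫⁻ y, ‖u n (x - t • y)‖ₑ ∂ν with hv
  have huv : ∀ n, Measurable fun z : (Fin d → ℝ) × (Fin d → ℝ) => ‖u n (z.1 - t • z.2)‖ₑ :=
    fun n => ((hu n).comp (measurable_sub_smul t)).enorm
  have hvm : ∀ n, Measurable (v n) := fun n => (huv n).lintegral_prod_right'
  have hr' : 0 ≤ 1 - 1 / r.toReal := by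
    rcases eq_or_ne r ∞ with rfl | h
    · simp
    · have : 1 ≤ r.toReal := by simpa using ENNReal.toReal_mono h hr
      have := div_le_one_of_le₀ this (by positivity)
      linarith
  have hC : ∀ K : Set (Fin d → ℝ), IsCompact K →
      ∑' n, eLpNorm (u n) r volume * volume K ^ (1 - 1 / r.toReal) ≠ ∞ := fun K hK => by
    rw [ENNReal.tsum_mul_right]
    exact ENNReal.mul_ne_top hur (ENNReal.rpow_ne_top_of_nonneg hr' hK.measure_lt_top.ne)
  have hUK : ∀ K : Set (Fin d → ℝ), IsCompact K → ∑' n, ∫⁻ x in K, ‖u n x‖ₑ ≠ ∞ := fun K hK =>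
    ne_top_of_le_ne_top (hC K hK) (ENNReal.tsum_le_tsum fun n => by
      simpa using lintegral_compact_tr_le hr (hu n) K 0)
  have hVK : ∀ K : Set (Fin d → ℝ), IsCompact K → ∑' n, ∫⁻ x in K, v n x ≠ ∞ := fun K hK => by
    refine ne_top_of_le_ne_top (hC K hK) (ENNReal.tsum_le_tsum fun n => ?_)
    calc ∫⁻ x in K, v n x = ∫⁻ y, (∫⁻ x in K, ‖u n (x - t • y)‖ₑ) ∂ν :=
          lintegral_lintegral_swap (f := fun x y : Fin d → ℝ => ‖u n (x - t • y)‖ₑ)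
            (huv n).aemeasurable
      _ ≤ ∫⁻ _, eLpNorm (u n) r volume * volume K ^ (1 - 1 / r.toReal) ∂ν :=
          lintegral_mono fun y => lintegral_compact_tr_le hr (hu n) K (t • y)
      _ = _ := by simp
  have havg : ∀ n x, ‖avg ν t (u n) x‖ₑ ≤ v n x := fun n x => enorm_integral_le_lintegral_enorm _
  refine ⟨hUK, fun K hK => ?_, ?_⟩
  · refine ne_top_of_le_ne_top (ENNReal.add_ne_top.2 ⟨hVK K hK, hUK K hK⟩) ?_
    rw [← ENNReal.tsum_add]
    refine ENNReal.tsum_le_tsum fun n => ?_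
    rw [← lintegral_add_left (hvm n)]
    exact lintegral_mono fun x => (enorm_sub_le).trans (add_le_add (havg n x) le_rfl)
  · filter_upwards [ae_tsum_lt_top hvm hVK, ae_tsum_lt_top (fun n => (hu n).enorm) hUK]
      with x h1 h2
    have s1 : Summable fun n => avg ν t (u n) x := Summable.of_enorm
      (ne_top_of_le_ne_top h1.ne (ENNReal.tsum_le_tsum fun n => havg n x))
    have s2 : Summable fun n => u n x := Summable.of_enorm h2.ne
    simp only [Pi.sub_apply]
    rw [s1.tsum_sub s2]
    congr 1
    exact (integral_tsum (fun n => ((hu n).comp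
      (measurable_const.sub (measurable_id.const_smul t))).aestronglyMeasurable) h1.ne).symm

/-- Averaging at scale `t` commutes with the dilation by `ρ` up to replacing `t` by `t / ρ`. -/
theorem avg_smul_St {d : ℕ} {ν : Measure (Fin d → ℝ)} {t ρ : ℝ} (α : ℝ≥0∞)
    (c : ℂ) (g : (Fin d → ℝ) → ℂ) :
    avg ν t (c • St d α ρ g) - c • St d α ρ g = c • St d α ρ (avg ν (t / ρ) g - g) := by
  funext x
  simp only [avg, St, Pi.sub_apply, Pi.smul_apply, smul_sub, sub_left_inj]
  rw [integral_smul, integral_smul]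
  congr 3
  funext y
  rw [smul_smul, div_eq_inv_mul]

/-- The exponent conjugate to `p > 1` is finite. -/
theorem conj_ne_top {p p' : ℝ≥0∞} (hp : 1 < p) (h : 1 / p + 1 / p' = 1) : p' ≠ ∞ := by
  rintro rfl
  simp only [one_div, ENNReal.inv_top, add_zero, ENNReal.inv_eq_one] at h
  exact hp.ne' h

theorem conj_one_le {p p' : ℝ≥0∞} (h : 1 / p + 1 / p' = 1) : 1 ≤ p' := by
  have : 1 / p' ≤ 1 := le_add_self.trans_eq h
  simpa using this

theorem conj_anti {a b a' b' : ℝ≥0∞} (hab : a ≤ b) (ha : 1 / a + 1 / a' = 1)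
    (hb : 1 / b + 1 / b' = 1) : b' ≤ a' := by
  have h1 : 1 / b ≤ 1 := le_self_add.trans_eq hb
  have h2 : 1 / a' ≤ 1 / b' := by
    have hba : 1 / b ≤ 1 / a := by simpa using hab
    have hne : 1 / b ≠ ∞ := ne_top_of_le_ne_top (by simp) h1
    refine (ENNReal.add_le_add_iff_left hne).1 ?_
    calc 1 / b + 1 / a' ≤ 1 / a + 1 / a' := add_le_add hba le_rfl
      _ = 1 / b + 1 / b' := by rw [ha, hb]
  simpa using h2

/-! ### The approximate identity -/

/-- Approximate identity: for `1 < q` and a nonnegative `φ ∈ L^1(ℝ^d)` with `‖φ‖_1 = 1`,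
one has `‖f ∗ St^{(1)}_ε φ − f‖_{𝓗(q,p,α)} → 0` as `ε → 0⁺`, for every `f ∈ 𝓗(q,p,α)`;
consequently `𝓗(q,p,α)` is an essential Banach `L^1(ℝ^d)`-module. -/
theorem H_approximate_identity
    (d : ℕ) (hd : 1 ≤ d) (q p α q' p' α' : ℝ≥0∞)
    (hq : 1 < q) (hqα : q ≤ α) (hαp : α ≤ p)
    (hqq' : 1 / q + 1 / q' = 1) (hpp' : 1 / p + 1 / p' = 1) (hαα' : 1 / α + 1 / α' = 1)
    (φ : (Fin d → ℝ) → ℝ) (hφ : Integrable φ volume) (hφ0 : ∀ x, 0 ≤ φ x)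
    (hφ1 : ∫ x, φ x = 1)
    (f : (Fin d → ℝ) → ℂ) (hf : MemH d q' p' α' f) :
    Tendsto (fun ε : ℝ =>
        HNorm d q' p' α'
          ((fun x => ∫ y, f (x - y) * ((ε ^ (-(d : ℝ)) * φ (ε⁻¹ • y) : ℝ) : ℂ)) - f))
      (𝓝[>] (0 : ℝ)) (𝓝 0) := by
  have hp1 : 1 ≤ p' := conj_one_le hpp'
  have hpα : p' ≤ α' := conj_anti hαp hαα' hpp'
  have hαq : α' ≤ q' := conj_anti hqα hqq' hαα'
  have hqt : q' ≠ ∞ := conj_ne_top hq hqq'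
  have hpq : p' ≤ q' := hpα.trans hαq
  have hα1 : 1 ≤ α' := hp1.trans hpα
  have hαt : α' ≠ ∞ := ne_top_of_le_ne_top hqt hαq
  have hpt : p' ≠ ∞ := ne_top_of_le_ne_top hqt hpq
  have hp0 : p' ≠ 0 := (zero_lt_one.trans_le hp1).ne'
  have hα0 : α' ≠ 0 := (zero_lt_one.trans_le hα1).ne'
  have hq1 : 1 ≤ q' := hp1.trans hpq
  set ν : Measure (Fin d → ℝ) := volume.withDensity fun x => ENNReal.ofReal (φ x) with hν
  have hνp : IsProbabilityMeasure ν := ⟨by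
    rw [hν, withDensity_apply _ MeasurableSet.univ, Measure.restrict_univ,
      ← ofReal_integral_eq_lintegral_ofReal hφ (Eventually.of_forall hφ0), hφ1,
      ENNReal.ofReal_one]⟩
  have hνv : ν ≪ volume := withDensity_absolutelyContinuous _ _
  obtain ⟨c, ρ, g₀, H⟩ := hf
  -- Each `g₀ n` is replaced by a measurable function equal to it almost everywhere.
  have hgm₀ : ∀ n, AEMeasurable (g₀ n) volume := fun n =>
    (H.loc_int n).aestronglyMeasurable.aemeasurable
  let g : ℕ → (Fin d → ℝ) → ℂ := fun n => (hgm₀ n).mk (g₀ n)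
  have hg : ∀ n, Measurable (g n) := fun n => (hgm₀ n).measurable_mk
  have hgg : ∀ n, g₀ n =ᵐ[volume] g n := fun n => (hgm₀ n).ae_eq_mk
  have hN : ∀ n, amalgamNorm d q' p' 1 (g n) ≤ 1 := fun n => by
    rw [← amalgam_congr hp0 hpt (hgg n)]; exact H.norm_le n
  let u : ℕ → (Fin d → ℝ) → ℂ := fun n => c n • St d α' (ρ n) (g n)
  have hu : ∀ n, Measurable (u n) := fun n => (measurable_St (hg n)).const_smul (c n)
  have hcs : ∑' n, ‖c n‖ₑ ≠ ∞ := tsum_enorm_ne_top_iff_summable_norm.2 H.summable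
  have hur : ∑' n, eLpNorm (u n) α' volume ≠ ∞ := by
    refine ne_top_of_le_ne_top hcs (ENNReal.tsum_le_tsum fun n => ?_)
    change eLpNorm (c n • St d α' (ρ n) (g n)) α' volume ≤ _
    rw [eLpNorm_const_smul, eLpNorm_St hα0 hαt (H.rho_pos n) (hg n)]
    calc _ ≤ ‖c n‖ₑ * 1 := by
          gcongr
          exact (eLpNorm_le_amalgam hp0 hpα hαq hαt (hg n).aestronglyMeasurable).trans (hN n)
      _ = _ := mul_one _
  set F : (Fin d → ℝ) → ℂ := fun x => ∑' n, u n x with hF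
  -- The first conclusion of `avg_tsum` does not involve the scale `t`.
  have hUK := (avg_tsum (ν := ν) (t := 0) hα1 hu hur).1
  obtain ⟨-, hFl, hFt⟩ := series_L1loc hu hUK
  have hfF : f =ᵐ[volume] F := by
    refine L1loc_unique (S := fun m x => ∑ n ∈ Finset.range m, u n x) (fun m => ?_)
      H.f_loc_int hFl (fun K hK => ?_) hFt
    · rw [locallyIntegrable_iff]
      intro K hK
      refine integrable_finsetSum _ fun n _ => ⟨(hu n).aestronglyMeasurable, ?_⟩
      exact lt_top_iff_ne_top.2 (ENNReal.ne_top_of_tsum_ne_top (hUK K hK) n)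
    · refine (H.tendsto K hK).congr fun m => integral_congr_ae (ae_restrict_of_ae ?_)
      have : ∀ᵐ x : Fin d → ℝ, ∀ n, St d α' (ρ n) (g₀ n) x = St d α' (ρ n) (g n) x :=
        ae_all_iff.2 fun n => St_congr (H.rho_pos n) (hgg n)
      filter_upwards [this] with x hx
      simp [u, hx]
  -- The unnormalised new atoms and their amalgam norms.
  let h : ℝ → ℕ → (Fin d → ℝ) → ℂ := fun ε n => avg ν (ε / ρ n) (g n) - g n
  have hhm : ∀ ε n, Measurable (h ε n) := fun ε n => (measurable_avg (hg n)).sub (hg n)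
  let a : ℝ → ℕ → ℝ := fun ε n => (amalgamNorm d q' p' 1 (h ε n)).toReal
  let C : ℝ := (offs d {0, 1}).card + 1
  have hNh : ∀ ε n, amalgamNorm d q' p' 1 (h ε n) ≤ ((offs d {0, 1}).card : ℝ≥0∞) + 1 :=
    fun ε n => amalgam_avg_sub_le hp1 hpq hqt (hg n) (hN n)
  have hNht : ∀ ε n, amalgamNorm d q' p' 1 (h ε n) ≠ ∞ := fun ε n =>
    ne_top_of_le_ne_top (by simp) (hNh ε n)
  have ha0 : ∀ ε n, 0 ≤ a ε n := fun ε n => ENNReal.toReal_nonneg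
  have haC : ∀ ε n, a ε n ≤ C := fun ε n => by
    have := ENNReal.toReal_mono (by simp) (hNh ε n)
    rwa [ENNReal.toReal_add (by simp) (by simp), ENNReal.toReal_natCast, ENNReal.toReal_one] at this
  have hat : ∀ n, Tendsto (fun ε => a ε n) (𝓝[>] (0 : ℝ)) (𝓝 0) := fun n => by
    have h1 : Tendsto (fun ε : ℝ => ε / ρ n) (𝓝[>] (0 : ℝ)) (𝓝 0) := by
      have : Tendsto (fun ε : ℝ => ε / ρ n) (𝓝 (0 : ℝ)) (𝓝 (0 / ρ n)) :=
        tendsto_id.div_const _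
      rw [zero_div] at this
      exact this.mono_left nhdsWithin_le_nhds
    have h2 := (tendsto_amalgam_avg (ν := ν) hp1 hpq hqt (hg n) (hN n)).comp h1
    exact (ENNReal.tendsto_toReal ENNReal.zero_ne_top).comp h2
  -- Dividing by `a ε n + ε` instead of `a ε n` avoids a case distinction when `h ε n` vanishes;
  -- the extra cost `ε * Σ ‖c n‖` tends to zero.
  have hdec : ∀ ε : ℝ, 0 < ε → IsHDecomp d q' p' α'
      ((fun x => ∫ y, f (x - y) * ((ε ^ (-(d : ℝ)) * φ (ε⁻¹ • y) : ℝ) : ℂ)) - f)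
      (fun n => c n * ((a ε n + ε : ℝ) : ℂ)) ρ (fun n => (a ε n + ε)⁻¹ • h ε n) := by
    intro ε hε
    obtain ⟨-, hWK, hW⟩ := avg_tsum (ν := ν) (t := ε) hα1 hu hur
    have hpos : ∀ n, 0 < a ε n + ε := fun n => add_pos_of_nonneg_of_pos (ha0 ε n) hε
    obtain ⟨-, hWl, hWt⟩ := series_L1loc (u := fun n => avg ν ε (u n) - u n)
      (fun n => (measurable_avg (hu n)).sub (hu n)) hWK
    have hfw : (fun x => ∑' n, (avg ν ε (u n) - u n) x) =ᵐ[volume]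
        ((fun x => ∫ y, f (x - y) * ((ε ^ (-(d : ℝ)) * φ (ε⁻¹ • y) : ℝ) : ℂ)) - f) := by
      rw [conv_eq_avg hφ hφ0 hε f, ← hν, avg_congr hνv hε.ne' hfF]
      filter_upwards [hW, hfF] with x hx hfx
      rw [hx, Pi.sub_apply, Pi.sub_apply, hfx]
    have hw : ∀ n, (c n * ((a ε n + ε : ℝ) : ℂ)) • St d α' (ρ n) ((a ε n + ε)⁻¹ • h ε n) =
        avg ν ε (u n) - u n := fun n => by
      change _ = avg ν ε (c n • St d α' (ρ n) (g n)) - c n • St d α' (ρ n) (g n)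
      rw [avg_smul_St]
      funext x
      simp only [St, Pi.smul_apply, Complex.real_smul, smul_eq_mul]
      have : ((a ε n + ε : ℝ) : ℂ) * (((a ε n + ε)⁻¹ : ℝ) : ℂ) = 1 := by
        exact_mod_cast mul_inv_cancel₀ (hpos n).ne'
      linear_combination (c n * ((ρ n ^ (-(d : ℝ) * (1 / α').toReal) : ℝ) : ℂ) *
        h ε n ((ρ n)⁻¹ • x)) * this
    refine ⟨?_, H.rho_pos, fun n => ?_, fun n => ?_, hWl.congr hfw, fun K hK => ?_⟩
    · refine Summable.of_nonneg_of_le (fun n => norm_nonneg _) (fun n => ?_)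
        (H.summable.mul_right (C + ε))
      rw [norm_mul, Complex.norm_real, Real.norm_of_nonneg (hpos n).le]
      gcongr
      exact haC ε n
    · have hm : MemLp (h ε n) q' volume := ⟨(hhm ε n).aestronglyMeasurable,
        (eLpNorm_le_amalgam hp0 hpq le_rfl hqt (hhm ε n).aestronglyMeasurable).trans_lt
          (hNht ε n).lt_top⟩
      exact (hm.const_smul _).locallyIntegrable hq1
    · rw [amalgam_smul hp0 hpt, Real.enorm_of_nonneg (inv_nonneg.2 (hpos n).le),
        ← ENNReal.ofReal_toReal (hNht ε n), ← ENNReal.ofReal_mul (inv_nonneg.2 (hpos n).le)]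
      refine ENNReal.ofReal_le_one.2 ?_
      rw [inv_mul_le_one₀ (hpos n)]
      change a ε n ≤ a ε n + ε
      linarith
    · refine (hWt K hK).congr fun m => integral_congr_ae (ae_restrict_of_ae ?_)
      filter_upwards [hfw] with x hx
      rw [hx, Finset.sum_apply]
      simp only [hw]
  have hreal : Tendsto (fun ε : ℝ => ∑' n, ‖c n‖ * (a ε n + ε)) (𝓝[>] (0 : ℝ)) (𝓝 0) := by
    have hid : Tendsto (fun ε : ℝ => ε) (𝓝[>] (0 : ℝ)) (𝓝 0) := nhdsWithin_le_nhds
    have := tendsto_tsum_of_dominated_convergence (𝓕 := 𝓝[>] (0 : ℝ))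
      (f := fun ε n => ‖c n‖ * (a ε n + ε)) (g := fun _ => (0 : ℝ))
      (bound := fun n => ‖c n‖ * (C + 1)) (H.summable.mul_right _) (fun n => ?_) ?_
    · simpa using this
    · simpa using ((hat n).add hid).const_mul ‖c n‖
    · filter_upwards [Ioo_mem_nhdsGT (zero_lt_one : (0 : ℝ) < 1)] with ε hε n
      rw [Real.norm_of_nonneg (mul_nonneg (norm_nonneg _) (add_nonneg (ha0 ε n) hε.1.le))]
      have := haC ε n
      have := hε.2.le
      gcongr
  have hE := ENNReal.tendsto_ofReal hreal
  rw [ENNReal.ofReal_zero] at hE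
  refine tendsto_of_tendsto_of_tendsto_of_le_of_le' tendsto_const_nhds hE
    (Eventually.of_forall fun _ => zero_le) ?_
  filter_upwards [self_mem_nhdsWithin] with ε hε
  have hε' : 0 < ε := hε
  refine sInf_le ⟨_, _, _, hdec ε hε', ?_⟩
  have e : ∀ n, ‖c n * ((a ε n + ε : ℝ) : ℂ)‖ = ‖c n‖ * (a ε n + ε) := fun n => by
    rw [norm_mul, Complex.norm_real, Real.norm_of_nonneg (add_nonneg (ha0 ε n) hε'.le)]
  rw [ENNReal.ofReal_tsum_of_nonneg]
  · simp only [e]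
  · exact fun n => mul_nonneg (norm_nonneg _) (add_nonneg (ha0 ε n) hε'.le)
  · exact ((hdec ε hε').summable).congr fun n => e n
end

section
/- Let d ≥ 1 and 1 ≤ q < α < ∞. The Zorko space 𝓩_{q',dq/α}(ℝ^d) is continuously embedded into 𝓗(q,∞,α): there exists a constant C' > 0 (one may take C' = 2^d |B(0,1)|^{1/α − 1/q} in the atomic estimate) such that every f ∈ 𝓩_{q',dq/α}(ℝ^d) with atomic decomposition f = Σ_k c_k 𝔞_k admits an 𝔥-decomposition f = Σ_k (C' c_k) St^{(α')}_{r_k} u_k with ‖u_k‖_{q',1} ≤ 1, where r_k is the radius of the ball B_k supporting 𝔞_k and u_k = (C')^{-1} St^{(α')}_{r_k^{-1}} 𝔞_k; in particular f ∈ 𝓗(q,∞,α) and ‖f‖_{𝓗(q,∞,α)} ≤ C' Σ_k |c_k|. -/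
/-!
Put `u_k = C'⁻¹ St^{(α')}_{r_k⁻¹} 𝔞_k`.  Dilations with the same exponent compose to the identity,
so `(C' c_k) St^{(α')}_{r_k} u_k = c_k 𝔞_k` (`St_smul_St_inv`) and the partial sums of the two
decompositions coincide.  What remains is the estimate `‖u_k‖_{q',1} ≤ 1`.

The function `St^{(α')}_{r⁻¹} 𝔞` is supported in a ball of radius `1`, and by scaling its
`L^{q'}` norm is `r^{d(1/α' - 1/q')} ‖𝔞‖_{q'} = r^{d(1/q - 1/α)} ‖𝔞‖_{q'}`.  Balls here are those of
the sup norm, with volume `(2r)^d`, so the atom condition bounds this by `2^{d(1/α - 1/q)} ≤ 1`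
(`eLpNorm_St_inv_le_one`).  A sup-norm ball of radius `1` meets at most `3^d` of the unit cubes
`I_k`, so the `ℓ^1` sum of the local norms is at most `3^d` times the global norm
(`amalgamNorm_one_le`), and `C' = 3^d` works.
-/

open MeasureTheory Filter Topology ENNReal

theorem St_smul_St_inv (d : ℕ) (α : ℝ≥0∞) {r : ℝ} (hr : 0 < r) (b : ℂ) (a : (Fin d → ℝ) → ℂ) :
    St d α r (b • St d α r⁻¹ a) = b • a := by
  funext x
  have h1 : r • r⁻¹ • x = x := smul_inv_smul₀ hr.ne' x
  have h2 : r ^ (-(d : ℝ) * (1 / α).toReal) * r⁻¹ ^ (-(d : ℝ) * (1 / α).toReal) = 1 := by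
    rw [Real.inv_rpow hr.le, mul_inv_cancel₀ (Real.rpow_pos_of_pos hr _).ne']
  simp only [St, Pi.smul_apply, inv_inv, h1]
  rw [smul_comm b, smul_smul, h2, one_smul]

theorem integrable_of_support_subset_ball {d : ℕ} {a : (Fin d → ℝ) → ℂ} {z : Fin d → ℝ} {r : ℝ}
    (ha : LocallyIntegrable a volume) (hs : Function.support a ⊆ Metric.ball z r) :
    Integrable a volume :=
  (integrableOn_iff_integrable_of_support_subset (hs.trans Metric.ball_subset_closedBall)).1
    (ha.integrableOn_isCompact (isCompact_closedBall z r))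

theorem eLpNorm_comp_smul (d : ℕ) (p : ℝ≥0∞) {r : ℝ} (hr : 0 < r)
    (a : (Fin d → ℝ) → ℂ) :
    eLpNorm (fun x => a (r • x)) p volume =
      ENNReal.ofReal (r ^ (-(d : ℝ) * (1 / p).toReal)) * eLpNorm a p volume := by
  have hemb : MeasurableEmbedding (fun x : Fin d → ℝ => r • x) :=
    measurableEmbedding_const_smul₀ hr.ne'
  have h := hemb.eLpNorm_map_measure (μ := volume) (g := a) (p := p)
  have hmap : Measure.map (fun x : Fin d → ℝ => r • x) volume =
      ENNReal.ofReal |(r ^ d)⁻¹| • (volume : Measure (Fin d → ℝ)) := by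
    simpa using Measure.map_addHaar_smul (volume : Measure (Fin d → ℝ)) hr.ne'
  have hpos : 0 < (r ^ d)⁻¹ := by positivity
  rw [hmap, abs_of_pos hpos,
    eLpNorm_smul_measure_of_ne_zero (by simpa using hpos)] at h
  change eLpNorm (a ∘ fun x => r • x) p volume = _
  rw [← h, smul_eq_mul, ENNReal.ofReal_rpow_of_pos hpos]
  congr 2
  rw [← Real.rpow_natCast, ← Real.rpow_neg hr.le, ← Real.rpow_mul hr.le]

/-- The scaling estimate for one atom; the powers of `r` cancel because
`1/α' - 1/q' = 1/q - 1/α`. -/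
theorem eLpNorm_St_inv_le_one (d : ℕ) {q α q' α' : ℝ≥0∞} (hqα : q < α)
    (hqq' : 1 / q + 1 / q' = 1) (hαα' : 1 / α + 1 / α' = 1) {r : ℝ} (hr : 0 < r)
    (z : Fin d → ℝ) (a : (Fin d → ℝ) → ℂ)
    (ha : eLpNorm a q' volume ≤
      (volume (Metric.ball z r)) ^ ((1 / α).toReal - (1 / q).toReal)) :
    eLpNorm (St d α' r⁻¹ a) q' volume ≤ 1 := by
  have nq : 1 / q ≠ ∞ := fun h => by simp [h] at hqq'
  have nq' : 1 / q' ≠ ∞ := fun h => by simp [h] at hqq'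
  have nα : 1 / α ≠ ∞ := fun h => by simp [h] at hαα'
  have nα' : 1 / α' ≠ ∞ := fun h => by simp [h] at hαα'
  have e1 : (1 / q).toReal + (1 / q').toReal = 1 := by
    rw [← ENNReal.toReal_add nq nq', hqq', ENNReal.toReal_one]
  have e2 : (1 / α).toReal + (1 / α').toReal = 1 := by
    rw [← ENNReal.toReal_add nα nα', hαα', ENNReal.toReal_one]
  have e3 : (1 / α).toReal ≤ (1 / q).toReal :=
    ENNReal.toReal_mono nq (ENNReal.div_le_div_left hqα.le 1)
  have hSt : St d α' r⁻¹ a =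
      (r⁻¹ ^ (-(d : ℝ) * (1 / α').toReal) : ℝ) • fun x => a (r • x) := by
    funext x; simp [St]
  rw [hSt, eLpNorm_const_smul, eLpNorm_comp_smul d q' hr,
    Real.enorm_of_nonneg (by positivity)]
  refine (mul_le_mul_right (mul_le_mul_right ha _) _).trans ?_
  rw [Real.volume_pi_ball z hr, Fintype.card_fin, ENNReal.ofReal_rpow_of_pos (by positivity),
    ← ENNReal.ofReal_mul (by positivity), ← ENNReal.ofReal_mul (by positivity)]
  refine ENNReal.ofReal_le_one.2 ?_
  have key : r⁻¹ ^ (-(d : ℝ) * (1 / α').toReal) * (r ^ (-(d : ℝ) * (1 / q').toReal) *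
      ((2 * r) ^ d) ^ ((1 / α).toReal - (1 / q).toReal)) =
      2 ^ ((d : ℝ) * ((1 / α).toReal - (1 / q).toReal)) := by
    rw [← Real.rpow_natCast, ← Real.rpow_mul (by positivity), Real.mul_rpow (by norm_num) hr.le,
      Real.inv_rpow hr.le, ← Real.rpow_neg hr.le, mul_left_comm (r ^ _) (2 ^ _), mul_left_comm,
      ← Real.rpow_add hr, ← Real.rpow_add hr]
    have e : -(-(d : ℝ) * (1 / α').toReal) + (-(d : ℝ) * (1 / q').toReal +
        (d : ℝ) * ((1 / α).toReal - (1 / q).toReal)) = 0 := by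
      linear_combination (d : ℝ) * (e2 - e1)
    rw [e, Real.rpow_zero, mul_one]
  rw [key]
  exact Real.rpow_le_one_of_one_le_of_nonpos (by norm_num)
    (mul_nonpos_of_nonneg_of_nonpos (by positivity) (by linarith))

/-- The unit cubes meeting an open sup-norm ball of radius `1` around `w` have each index `k j`
within `1` of `⌊w j⌋`, hence there are at most `3 ^ d` of them. -/
theorem amalgamNorm_one_le (d : ℕ) (p : ℝ≥0∞) (u : (Fin d → ℝ) → ℂ) (w : Fin d → ℝ)
    (hu : Function.support u ⊆ Metric.ball w 1) :
    amalgamNorm d p 1 1 u ≤ 3 ^ d * eLpNorm u p volume := by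
  have hcube : ∀ k, MeasurableSet (cube d 1 k) := fun k =>
    MeasurableSet.univ_pi fun _ => measurableSet_Ico
  let S : Finset (Fin d → ℤ) := Fintype.piFinset fun j => Finset.Icc (⌊w j⌋ - 1) (⌊w j⌋ + 1)
  have hS : S.card = 3 ^ d := by
    have h3 : ∀ m : ℤ, (m + 1 + 1 - (m - 1)).toNat = 3 := fun m => by omega
    simp [S, h3]
  have hzero : ∀ k ∉ S, eLpNorm ((cube d 1 k).indicator u) p volume = 0 := by
    intro k hk
    have : (cube d 1 k).indicator u = 0 := by
      funext x
      by_contra hx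
      have hxk : x ∈ cube d 1 k := Set.mem_of_indicator_ne_zero hx
      have hux : x ∈ Metric.ball w 1 := by
        refine hu ?_
        simpa [Set.indicator_of_mem hxk] using hx
      refine hk (Fintype.mem_piFinset.2 fun j => ?_)
      have h1 := hxk j (Set.mem_univ j)
      simp only [mul_one, Set.mem_Ico] at h1
      have h2 := (dist_le_pi_dist x w j).trans_lt hux
      rw [Real.dist_eq, abs_lt] at h2
      have h3 := Int.floor_le (w j)
      have h4 := Int.lt_floor_add_one (w j)
      have h5 : (⌊w j⌋ : ℝ) < (k j : ℝ) + 2 := by linarith [h1.2, h2.1]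
      have h6 : (k j : ℝ) < (⌊w j⌋ : ℝ) + 2 := by linarith [h1.1, h2.2]
      have h5' : ⌊w j⌋ < k j + 2 := by exact_mod_cast h5
      have h6' : k j < ⌊w j⌋ + 2 := by exact_mod_cast h6
      exact Finset.mem_Icc.2 ⟨by omega, by omega⟩
    rw [this, eLpNorm_zero]
  simp only [amalgamNorm, ENNReal.one_ne_top, if_false, ENNReal.toReal_one, ENNReal.rpow_one,
    div_one]
  rw [tsum_eq_sum hzero]
  refine (Finset.sum_le_card_nsmul S _ (eLpNorm u p volume) fun k _ =>
    eLpNorm_indicator_le u).trans ?_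
  rw [hS, nsmul_eq_mul]
  simp

/-- The Zorko space `𝓩_{q',dq/α}(ℝ^d)` is continuously embedded into `𝓗(q,∞,α)`:
there is a constant `C' > 0` such that every Zorko atomic decomposition
`f = Σ_k c_k 𝔞_k` (atoms `𝔞_k` supported in balls `B_k = B(z_k, r_k)` with
`‖𝔞_k‖_{q'} ≤ |B_k|^{1/α - 1/q}`) yields an 𝔥-decomposition
`f = Σ_k (C' c_k) St^{(α')}_{r_k} u_k` with `u_k = C'⁻¹ St^{(α')}_{r_k⁻¹} 𝔞_k`,
`‖u_k‖_{q',1} ≤ 1`; in particular `f ∈ 𝓗(q,∞,α)` and `‖f‖_{𝓗(q,∞,α)} ≤ C' Σ_k |c_k|`. -/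
theorem zorko_embedded_in_H
    (d : ℕ) (hd : 1 ≤ d) (q α q' α' : ℝ≥0∞)
    (hq : 1 ≤ q) (hqα : q < α) (hα : α < ∞)
    (hqq' : 1 / q + 1 / q' = 1) (hαα' : 1 / α + 1 / α' = 1) :
    ∃ C' : ℝ, 0 < C' ∧
      ∀ (f : (Fin d → ℝ) → ℂ) (c : ℕ → ℂ) (a : ℕ → (Fin d → ℝ) → ℂ)
        (z : ℕ → (Fin d → ℝ)) (r : ℕ → ℝ),
        LocallyIntegrable f volume →
        Summable (fun k => ‖c k‖) →
        (∀ k, 0 < r k) →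
        (∀ k, LocallyIntegrable (a k) volume) →
        (∀ k, Function.support (a k) ⊆ Metric.ball (z k) (r k)) →
        (∀ k, eLpNorm (a k) q' volume ≤
          (volume (Metric.ball (z k) (r k))) ^ ((1 / α).toReal - (1 / q).toReal)) →
        (∀ K : Set (Fin d → ℝ), IsCompact K →
          Tendsto (fun m => ∫ x in K, ‖(∑ k ∈ Finset.range m, c k • a k) x - f x‖)
            atTop (𝓝 0)) →
        (∀ k, amalgamNorm d q' 1 1 (((C' : ℂ)⁻¹) • St d α' (r k)⁻¹ (a k)) ≤ 1) ∧
          IsHDecomp d q' 1 α' f (fun k => (C' : ℂ) * c k) r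
            (fun k => ((C' : ℂ)⁻¹) • St d α' (r k)⁻¹ (a k)) ∧
          MemH d q' 1 α' f ∧
          HNorm d q' 1 α' f ≤ ENNReal.ofReal C' * ∑' k, ENNReal.ofReal ‖c k‖ := by
  refine ⟨3 ^ d, by positivity, ?_⟩
  intro f c a z r hf hc hr ha hs hna hT
  set C : ℂ := ((3 ^ d : ℝ) : ℂ) with hC
  have hC0 : C ≠ 0 := by simp [hC]
  have hCn : ‖C‖ = 3 ^ d := by simp [hC]
  have hsupp : ∀ k, Function.support (C⁻¹ • St d α' (r k)⁻¹ (a k)) ⊆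
      Metric.ball ((r k)⁻¹ • z k) 1 := by
    intro k x hx
    have hax : a k (r k • x) ≠ 0 := by
      intro h
      simp [St, h] at hx
    have hb := hs k hax
    have e : dist x ((r k)⁻¹ • z k) = (r k)⁻¹ * dist (r k • x) (z k) := by
      conv_lhs => rw [← inv_smul_smul₀ (hr k).ne' x]
      rw [dist_smul₀, Real.norm_of_nonneg (inv_nonneg.2 (hr k).le)]
    rw [Metric.mem_ball] at hb ⊢
    rw [e, inv_mul_lt_iff₀ (hr k), mul_one]
    exact hb
  have hnorm : ∀ k, amalgamNorm d q' 1 1 (C⁻¹ • St d α' (r k)⁻¹ (a k)) ≤ 1 := by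
    intro k
    refine (amalgamNorm_one_le d q' _ _ (hsupp k)).trans ?_
    rw [eLpNorm_const_smul]
    have h1 := eLpNorm_St_inv_le_one d hqα hqq' hαα' (hr k) (z k) (a k) (hna k)
    have h2 : (3 : ℝ≥0∞) ^ d * ‖C⁻¹‖ₑ = 1 := by
      rw [enorm_inv hC0, ← ofReal_norm, hCn, ENNReal.ofReal_pow (by norm_num)]
      simp only [ENNReal.ofReal_ofNat]
      exact ENNReal.mul_inv_cancel (by simp) (by simp)
    rw [← mul_assoc, h2, one_mul]
    exact h1
  have hdec : IsHDecomp d q' 1 α' f (fun k => C * c k) r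
      (fun k => C⁻¹ • St d α' (r k)⁻¹ (a k)) := by
    refine ⟨?_, hr, fun k => ?_, hnorm, hf, fun K hK => ?_⟩
    · simpa only [norm_mul] using hc.mul_left ‖C‖
    · have hi := ((integrable_of_support_subset_ball (ha k) (hs k)).comp_smul (hr k).ne').smul
        ((r k)⁻¹ ^ (-(d : ℝ) * (1 / α').toReal) : ℝ)
      have hi' : Integrable (St d α' (r k)⁻¹ (a k)) volume := by
        refine hi.congr (Eventually.of_forall fun x => ?_)
        simp [St]
      exact (hi'.smul C⁻¹).locallyIntegrable
    · have e : ∀ k, (C * c k) • St d α' (r k) (C⁻¹ • St d α' (r k)⁻¹ (a k)) = c k • a k := by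
        intro k
        rw [St_smul_St_inv d α' (hr k), smul_smul, mul_right_comm, mul_inv_cancel₀ hC0, one_mul]
      simp only [e]
      exact hT K hK
  refine ⟨hnorm, hdec, ⟨_, _, _, hdec⟩, ?_⟩
  refine sInf_le ⟨_, _, _, hdec, ?_⟩
  rw [← ENNReal.tsum_mul_left]
  refine tsum_congr fun k => ?_
  rw [norm_mul, hCn, ENNReal.ofReal_mul (by positivity)]
end
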